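/- Let p be an odd prime, let d and r be positive integers with d > r, let ρ₁, …, ρᵣ : ℝᵈ × ℝᵈ → ℝ be continuous functions that are symmetric (ρᵢ(x, y) = ρᵢ(y, x) for all x, y), and fix t₁, …, tᵣ with each tᵢ ∈ {1, …, (p−1)/2}. Then there exist p distinct points x₀, x₁, …, x_{p−1} in ℝᵈ, indexed by 𝔽_p, and real constants c₁, …, cᵣ (not necessarily positive) such that for each i = 1, …, r: ρᵢ(x₀, x_{tᵢ}) = ρᵢ(x_{tᵢ}, x_{2tᵢ}) = ⋯ = ρᵢ(x_{(p−1)tᵢ}, x₀) = cᵢ. -/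

import Mathlib

/-! Suppose that no injective configuration `x` of `p` points makes each of the functions
`f i k = ρ i (x k) (x (k + t i))` constant in `k`. Then every configuration displays, robustly, one
of finitely many patterns: either some `f i` takes two values that are far apart, and a gap
separates a superlevel set of `f i` from its complement; or two of the points are close together,
and the points fall into well separated clusters. Colouring a superlevel set by `i` and its
cardinality, and a clustering by the number of its classes, makes nearby configurations that show
patterns of the same colour show the same pattern. The cyclic shift of the configuration shifts the
pattern and, `p` being prime, fixes none. So the patterns give an equivariant labelling, by colours
and elements of `ZMod p`, of any space of configurations with a cyclic symmetry.

With `r` functions there are at most `r * (p - 1) + (p - 2)` colours. Take the configurations in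
`ℝᵈ` with nonnegative coordinates of total sum one, in which each coordinate vanishes at some
point. Topologically they form a join of `d` spheres of dimension `p - 2`, which is too highly
connected for so few colours when `r < d`, by the Borsuk–Ulam theorem for the cyclic group.

That theorem is proved with chains, as Tucker's lemma is. Coning produces small chains in the
configuration space with the differentials of the standard resolution of the cyclic group, and the
labelling maps them to oriented chains of a join of copies of `ZMod p`, in an exterior algebra.
There the group acts freely and chains with more vertices than colours vanish, so that a descent
through the resolution makes the class of a single vertex zero, which its augmentation forbids.
-/

open Finset

/-! ### Chains of lists -/

section Chains

variable {R V W : Type*} [CommRing R]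

/-- The cone with apex `a` over a chain of finite lists. -/
noncomputable def chainCons (a : V) : (List V →₀ R) →ₗ[R] (List V →₀ R) :=
  Finsupp.lmapDomain R R (List.cons a)

/-- The alternating sum of the faces of a list. It is augmented: the face of `[a]` is `[]`. -/
noncomputable def listBoundary (R : Type*) {V : Type*} [CommRing R] : List V → (List V →₀ R)
  | [] => 0
  | a :: l => Finsupp.single l 1 - chainCons a (listBoundary R l)

/-- The augmented boundary operator on chains of lists. -/
noncomputable def chainBoundary : (List V →₀ R) →ₗ[R] (List V →₀ R) :=
  Finsupp.linearCombination R (listBoundary R)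

/-- The map on chains of lists induced by a map on vertices. -/
noncomputable def chainMap (f : V → W) : (List V →₀ R) →ₗ[R] (List W →₀ R) :=
  Finsupp.lmapDomain R R (List.map f)

/-- The prism over a list: the alternating sum of the lists that run along the image under `f` and
switch once to the image under `g`. -/
noncomputable def listPrism (R : Type*) {V W : Type*} [CommRing R] (f g : V → W) :
    List V → (List W →₀ R)
  | [] => 0
  | a :: l => Finsupp.single (f a :: g a :: l.map g) 1 - chainCons (f a) (listPrism R f g l)

/-- The prism operator, a chain homotopy between the chain maps of two vertex maps. -/
noncomputable def chainPrism (f g : V → W) : (List V →₀ R) →ₗ[R] (List W →₀ R) :=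
  Finsupp.linearCombination R (listPrism R f g)

@[simp] lemma chainCons_single (a : V) (l : List V) (c : R) :
    chainCons a (Finsupp.single l c) = Finsupp.single (a :: l) c := by
  simp [chainCons, Finsupp.mapDomain_single]

@[simp] lemma chainMap_single (f : V → W) (l : List V) (c : R) :
    chainMap f (Finsupp.single l c) = Finsupp.single (l.map f) c := by
  simp [chainMap, Finsupp.mapDomain_single]

@[simp] lemma chainBoundary_single (l : List V) (c : R) :
    chainBoundary (Finsupp.single l c) = c • listBoundary R l := by
  simp [chainBoundary]

@[simp] lemma chainPrism_single (f g : V → W) (l : List V) (c : R) :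
    chainPrism f g (Finsupp.single l c) = c • listPrism R f g l := by
  simp [chainPrism]

lemma chainBoundary_chainCons (a : V) (z : List V →₀ R) :
    chainBoundary (chainCons a z) = z - chainCons a (chainBoundary z) := by
  induction z using Finsupp.induction_linear with
  | zero => simp
  | add x y hx hy => simp only [map_add, hx, hy]; abel
  | single l c => simp [listBoundary, smul_sub]

lemma chainMap_chainCons (f : V → W) (a : V) (z : List V →₀ R) :
    chainMap f (chainCons a z) = chainCons (f a) (chainMap f z) := by
  induction z using Finsupp.induction_linear with
  | zero => simp
  | add x y hx hy => simp [hx, hy]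
  | single l c => simp

lemma chainMap_listBoundary (f : V → W) (l : List V) :
    chainMap f (listBoundary R l) = listBoundary R (l.map f) := by
  induction l with
  | nil => simp [listBoundary]
  | cons a l ih => simp [listBoundary, chainMap_chainCons, ih]

lemma chainBoundary_chainMap (f : V → W) (z : List V →₀ R) :
    chainBoundary (chainMap f z) = chainMap f (chainBoundary z) := by
  induction z using Finsupp.induction_linear with
  | zero => simp
  | add x y hx hy => simp [hx, hy]
  | single l c => simp [chainMap_listBoundary]

lemma chainPrism_chainCons (f g : V → W) (a : V) (z : List V →₀ R) :
    chainPrism f g (chainCons a z) =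
      chainCons (f a) (chainCons (g a) (chainMap g z)) - chainCons (f a) (chainPrism f g z) := by
  induction z using Finsupp.induction_linear with
  | zero => simp
  | add x y hx hy => simp only [map_add, hx, hy]; abel
  | single l c => simp [listPrism, smul_sub]

lemma chainBoundary_listPrism (f g : V → W) (l : List V) :
    chainBoundary (listPrism R f g l) =
      Finsupp.single (l.map g) 1 - Finsupp.single (l.map f) 1 -
        chainPrism f g (listBoundary R l) := by
  induction l with
  | nil => simp [listPrism, listBoundary]
  | cons a l ih =>
    simp only [listPrism, listBoundary, map_sub, chainBoundary_single, one_smul,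
      chainBoundary_chainCons, chainPrism_single, chainPrism_chainCons, ih, chainCons_single,
      List.map_cons, chainMap_listBoundary]
    abel

lemma chainBoundary_chainPrism (f g : V → W) (z : List V →₀ R) :
    chainBoundary (chainPrism f g z) =
      chainMap g z - chainMap f z - chainPrism f g (chainBoundary z) := by
  induction z using Finsupp.induction_linear with
  | zero => simp
  | add x y hx hy => simp only [map_add, hx, hy]; abel
  | single l c => simp [chainBoundary_listPrism, smul_sub]

lemma chainMap_id : chainMap (id : V → V) = (LinearMap.id : (List V →₀ R) →ₗ[R] _) := by
  simp [chainMap]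

lemma chainMap_pow (s : V → V) (j : ℕ) :
    (chainMap s : Module.End R (List V →₀ R)) ^ j = chainMap s^[j] := by
  induction j with
  | zero => rw [pow_zero, Function.iterate_zero, chainMap_id]; rfl
  | succ j ih =>
    ext l : 2
    simp [pow_succ, ih]

lemma eq_of_mem_supported {α M : Type*} [AddCommGroup M] [Module R M]
    {F G : (α →₀ R) →ₗ[R] M} {S : Set α}
    (h : ∀ a ∈ S, F (Finsupp.single a 1) = G (Finsupp.single a 1)) {z : α →₀ R}
    (hz : z ∈ Finsupp.supported R R S) : F z = G z := by
  rw [Finsupp.supported_eq_span_single] at hz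
  exact LinearMap.eqOn_span (by rintro _ ⟨a, ha, rfl⟩; exact h a ha) hz

lemma map_mem_of_mem_supported {α M : Type*} [AddCommGroup M] [Module R M]
    {F : (α →₀ R) →ₗ[R] M} {S : Set α} {N : Submodule R M}
    (h : ∀ a ∈ S, F (Finsupp.single a 1) ∈ N) {z : α →₀ R}
    (hz : z ∈ Finsupp.supported R R S) : F z ∈ N := by
  rw [Finsupp.supported_eq_span_single] at hz
  exact Submodule.span_le (p := N.comap F).2 (by rintro _ ⟨a, ha, rfl⟩; exact h a ha) hz

lemma lmapDomain_mem_supported {α β : Type*} {f : α → β} {S : Set α} {T : Set β}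
    (h : Set.MapsTo f S T) {z : α →₀ R} (hz : z ∈ Finsupp.supported R R S) :
    Finsupp.lmapDomain R R f z ∈ Finsupp.supported R R T :=
  map_mem_of_mem_supported (fun a ha => by
    simpa [Finsupp.mapDomain_single] using Finsupp.single_mem_supported R 1 (h ha)) hz

lemma listBoundary_mem_supported (l : List V) :
    listBoundary R l ∈ Finsupp.supported R R {m | m.length + 1 = l.length ∧ m ⊆ l} := by
  induction l with
  | nil => simp [listBoundary]
  | cons a l ih =>
    refine sub_mem (Finsupp.single_mem_supported R _ (by simp)) ?_
    refine lmapDomain_mem_supported (fun m hm => ?_) ih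
    exact ⟨by simp [← hm.1], List.cons_subset_cons a hm.2⟩

lemma listPrism_mem_supported (f g : V → W) (l : List V) :
    listPrism R f g l ∈ Finsupp.supported R R
      {m | m.length = l.length + 1 ∧ ∀ x ∈ m, ∃ a ∈ l, x = f a ∨ x = g a} := by
  induction l with
  | nil => simp [listPrism]
  | cons a l ih =>
    refine sub_mem (Finsupp.single_mem_supported R _ ?_)
      (lmapDomain_mem_supported (fun m hm => ?_) ih)
    · exact ⟨by simp, by grind⟩
    · exact ⟨by simp [hm.1], by grind⟩

end Chains

/-! ### Oriented chains -/

section OrientedChains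

variable {R V W : Type*} [CommRing R]

/-- The oriented chain of a chain of lists. The exterior algebra over the free module on `V` is the
augmented oriented chain complex of the full simplex with vertex set `V`, and a list of vertices
gives the product of its vertices. -/
noncomputable def wedge : (List V →₀ R) →ₗ[R] ExteriorAlgebra R (V →₀ R) :=
  Finsupp.linearCombination R fun l =>
    (l.map fun x => ExteriorAlgebra.ι R (Finsupp.single x 1)).prod

/-- The boundary operator on oriented chains: contraction with the augmentation. -/
noncomputable def orientedBoundary :
    ExteriorAlgebra R (V →₀ R) →ₗ[R] ExteriorAlgebra R (V →₀ R) :=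
  CliffordAlgebra.contractLeft (Finsupp.linearCombination R fun _ => 1)

lemma wedge_single_nil : wedge (Finsupp.single ([] : List V) (1 : R)) = 1 := by
  simp [wedge]

lemma wedge_single_cons (a : V) (l : List V) :
    wedge (Finsupp.single (a :: l) (1 : R)) =
      ExteriorAlgebra.ι R (Finsupp.single a 1) * wedge (Finsupp.single l 1) := by
  simp [wedge]

lemma wedge_chainCons (a : V) (z : List V →₀ R) :
    wedge (chainCons a z) = ExteriorAlgebra.ι R (Finsupp.single a 1) * wedge z := by
  induction z using Finsupp.induction_linear with
  | zero => simp
  | add x y hx hy => simp only [map_add, hx, hy, mul_add]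
  | single l c => simp [wedge]

lemma contractLeft_wedge_single_cons (f : Module.Dual R (V →₀ R)) (a : V) (l : List V) :
    CliffordAlgebra.contractLeft f (wedge (Finsupp.single (a :: l) 1)) =
      f (Finsupp.single a 1) • wedge (Finsupp.single l 1) -
        ExteriorAlgebra.ι R (Finsupp.single a 1) *
          CliffordAlgebra.contractLeft f (wedge (Finsupp.single l 1)) := by
  rw [wedge_single_cons, CliffordAlgebra.contractLeft_ι_mul]

lemma orientedBoundary_wedge (z : List V →₀ R) :
    orientedBoundary (wedge z) = wedge (chainBoundary z) := by
  suffices orientedBoundary ∘ₗ wedge = wedge ∘ₗ chainBoundary (R := R) (V := V) from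
    LinearMap.congr_fun this z
  ext l : 2
  simp only [LinearMap.comp_apply, Finsupp.lsingle_apply, chainBoundary_single, one_smul]
  induction l with
  | nil => simp [wedge_single_nil, listBoundary, orientedBoundary]
  | cons a l ih =>
    rw [orientedBoundary] at ih ⊢
    simp [contractLeft_wedge_single_cons, ih, listBoundary, wedge_chainCons]

lemma orientedBoundary_orientedBoundary (x : ExteriorAlgebra R (V →₀ R)) :
    orientedBoundary (orientedBoundary x) = 0 :=
  CliffordAlgebra.contractLeft_contractLeft _ x

/-- The map on oriented chains induced by a map on vertices. -/
noncomputable def orientedMap (f : V → W) :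
    ExteriorAlgebra R (V →₀ R) →ₐ[R] ExteriorAlgebra R (W →₀ R) :=
  ExteriorAlgebra.map (Finsupp.lmapDomain R R f)

lemma orientedMap_wedge (f : V → W) (z : List V →₀ R) :
    orientedMap f (wedge z) = wedge (chainMap f z) := by
  induction z using Finsupp.induction_linear with
  | zero => simp
  | add x y hx hy => simp only [map_add, hx, hy]
  | single l c =>
    simp [wedge, orientedMap, map_list_prod, Function.comp_def, Finsupp.mapDomain_single]

lemma orientedBoundary_orientedMap (f : V → W) (x : ExteriorAlgebra R (V →₀ R)) :
    orientedBoundary (orientedMap f x) = orientedMap f (orientedBoundary x) := by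
  unfold orientedBoundary orientedMap
  induction x using CliffordAlgebra.left_induction with
  | algebraMap r => simp
  | add x y hx hy => simp only [map_add, hx, hy]
  | ι_mul x m hx =>
    rw [map_mul, ExteriorAlgebra.map_apply_ι, CliffordAlgebra.contractLeft_ι_mul, hx,
      CliffordAlgebra.contractLeft_ι_mul, map_sub, map_smul, map_mul, ExteriorAlgebra.map_apply_ι]
    simp [Finsupp.linearCombination_mapDomain, Function.comp_def]

lemma ι_single_mul_wedge_of_mem {a : V} {l : List V} (h : a ∈ l) :
    ExteriorAlgebra.ι R (Finsupp.single a 1) * wedge (Finsupp.single l (1 : R)) = 0 := by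
  induction l with
  | nil => simp at h
  | cons b l ih =>
    rw [wedge_single_cons, ← mul_assoc]
    rcases List.mem_cons.1 h with rfl | h
    · rw [ExteriorAlgebra.ι_sq_zero, zero_mul]
    · rw [eq_neg_of_add_eq_zero_left (ExteriorAlgebra.ι_add_mul_swap _ _), neg_mul, mul_assoc, ih h,
        mul_zero, neg_zero]

lemma wedge_single_of_not_nodup {l : List V} (h : ¬ l.Nodup) :
    wedge (Finsupp.single l (1 : R)) = 0 := by
  induction l with
  | nil => simp at h
  | cons a l ih =>
    rw [wedge_single_cons]
    by_cases ha : a ∈ l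
    · exact ι_single_mul_wedge_of_mem ha
    · rw [ih (fun hl => h (List.nodup_cons.2 ⟨ha, hl⟩)), mul_zero]

open Classical in
lemma ι_single_mul_contractLeft_wedge_single (a : V) (l : List V) :
    ExteriorAlgebra.ι R (Finsupp.single a 1) *
        CliffordAlgebra.contractLeft (Finsupp.lapply a) (wedge (Finsupp.single l (1 : R))) =
      if a ∈ l then wedge (Finsupp.single l 1) else 0 := by
  induction l with
  | nil => simp [wedge_single_nil]
  | cons b l ih =>
    rw [contractLeft_wedge_single_cons, mul_sub, ← mul_assoc]
    by_cases hab : a = b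
    · subst hab
      simp [wedge_single_cons]
    · rw [eq_neg_of_add_eq_zero_left (ExteriorAlgebra.ι_add_mul_swap _ _), neg_mul, mul_assoc, ih]
      simp [hab, wedge_single_cons]

/-- The restriction of oriented chains to the full simplex with vertex set `A`. -/
noncomputable def orientedRestrict (A : Set V) [DecidablePred (· ∈ A)] :
    ExteriorAlgebra R (V →₀ R) →ₐ[R] ExteriorAlgebra R (V →₀ R) :=
  ExteriorAlgebra.map <|
    Finsupp.linearCombination R fun x => if x ∈ A then Finsupp.single x 1 else 0

lemma orientedRestrict_wedge_single (A : Set V) [DecidablePred (· ∈ A)] (l : List V) :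
    orientedRestrict A (wedge (Finsupp.single l (1 : R))) =
      if ∀ x ∈ l, x ∈ A then wedge (Finsupp.single l 1) else 0 := by
  induction l with
  | nil => simp [wedge_single_nil]
  | cons a l ih =>
    rw [wedge_single_cons, map_mul, ih, orientedRestrict, ExteriorAlgebra.map_apply_ι]
    by_cases ha : a ∈ A <;> simp [ha]

end OrientedChains

/-! ### Modules over a cyclic group -/

section CyclicDiff

variable {R X Y : Type*} [Ring R] [AddCommGroup X] [Module R X] [AddCommGroup Y] [Module R Y]
  {p : ℕ}

/-- The differentials `s - 1` and `1 + s + ⋯ + s ^ (p - 1)`, in alternation, of the standard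
resolution of the cyclic group of order `p` with generator `s`. -/
def cyclicDiff {A : Type*} [Ring A] (p : ℕ) (s : A) (k : ℕ) : A :=
  if Even k then s - 1 else ∑ j ∈ range p, s ^ j

lemma cyclicDiff_add_two {A : Type*} [Ring A] (s : A) (k : ℕ) :
    cyclicDiff p s (k + 2) = cyclicDiff p s k := by
  simp [cyclicDiff, Nat.even_add]

lemma cyclicDiff_succ_mul_cyclicDiff {A : Type*} [Ring A] {s : A} (hs : s ^ p = 1) (k : ℕ) :
    cyclicDiff p s (k + 1) * cyclicDiff p s k = 0 := by
  by_cases hk : Even k <;> simp [cyclicDiff, Nat.even_add_one, hk, geom_sum_mul, mul_geom_sum, hs]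

lemma pow_apply_mem_of_mem_invtSubmodule {s : Module.End R X} {C : Submodule R X}
    (hs : C ∈ s.invtSubmodule) (j : ℕ) {x : X} (hx : x ∈ C) : (s ^ j) x ∈ C := by
  rw [Module.End.pow_apply]
  exact Set.MapsTo.iterate ((Module.End.mem_invtSubmodule_iff_mapsTo s).1 hs) j hx

lemma cyclicDiff_apply_mem {s : Module.End R X} {C : Submodule R X} (hs : C ∈ s.invtSubmodule)
    (k : ℕ) {x : X} (hx : x ∈ C) : cyclicDiff p s k x ∈ C := by
  unfold cyclicDiff
  split_ifs
  · exact sub_mem (hs hx) hx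
  · rw [LinearMap.sum_apply]
    exact sum_mem fun j _ => pow_apply_mem_of_mem_invtSubmodule hs j hx

lemma map_cyclicDiff_apply (F : X →ₗ[R] Y) {s : Module.End R X} {u : Module.End R Y}
    {C : Submodule R X} (hs : C ∈ s.invtSubmodule) (hF : ∀ x ∈ C, F (s x) = u (F x)) (k : ℕ) {x : X}
    (hx : x ∈ C) : F (cyclicDiff p s k x) = cyclicDiff p u k (F x) := by
  have hpow (j : ℕ) : F ((s ^ j) x) = (u ^ j) (F x) := by
    induction j with
    | zero => rfl
    | succ j ih =>
      rw [pow_succ', pow_succ', Module.End.mul_apply, Module.End.mul_apply,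
        hF _ (pow_apply_mem_of_mem_invtSubmodule hs j hx), ih]
  unfold cyclicDiff
  split_ifs
  · simp [hF x hx]
  · simp [LinearMap.sum_apply, hpow]

/-- **Higman's criterion** for exactness. -/
theorem exists_cyclicDiff_succ_eq {s q : Module.End R X} {C : Submodule R X}
    (hs : C ∈ s.invtSubmodule) (hq : C ∈ q.invtSubmodule)
    (htrace : ∀ x ∈ C, ∑ j ∈ range p, (s ^ j) (q ((s ^ (p - j)) x)) = x)
    (k : ℕ) {x : X} (hx : x ∈ C) (hk : cyclicDiff p s k x = 0) :
    ∃ y ∈ C, cyclicDiff p s (k + 1) y = x := by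
  by_cases hev : Even k
  · have hfix : s x = x := by simpa [cyclicDiff, hev, sub_eq_zero] using hk
    have hfix_pow (j : ℕ) : (s ^ j) x = x := by
      rw [Module.End.pow_apply]; exact Function.iterate_fixed hfix j
    refine ⟨q x, hq hx, ?_⟩
    simpa [cyclicDiff, Nat.even_add_one, hev, hfix_pow] using htrace x hx
  · have hnorm : ∑ j ∈ range p, (s ^ j) x = 0 := by simpa [cyclicDiff, hev] using hk
    have hnorm' : ∑ j ∈ range p, (s ^ (p - j)) x = 0 := by
      rw [← map_zero s, ← hnorm, map_sum, ← sum_range_reflect]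
      refine sum_congr rfl fun j hj => ?_
      rw [← Module.End.mul_apply, ← pow_succ', show p - (p - 1 - j) = j + 1 by grind]
    refine ⟨∑ j ∈ range p, ∑ i ∈ range j, (s ^ i) (q ((s ^ (p - j)) x)),
      sum_mem fun j _ => sum_mem fun i _ => ?_, ?_⟩
    · exact pow_apply_mem_of_mem_invtSubmodule hs i
        (hq (pow_apply_mem_of_mem_invtSubmodule hs _ hx))
    · have hgeom (j : ℕ) (y : X) : (s - 1) (∑ i ∈ range j, (s ^ i) y) = (s ^ j) y - y := by
        simpa using LinearMap.congr_fun (mul_geom_sum s j) y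
      rw [cyclicDiff, if_pos (by simpa [Nat.even_add_one] using hev), map_sum]
      simp only [hgeom]
      rw [sum_sub_distrib, htrace x hx, ← map_sum, hnorm', map_zero, sub_zero]

/-- A step down the staircase of a double complex with exact columns. -/
lemma mem_range_sup_map_cyclicDiff {s q d : Module.End R X} {C C' : Submodule R X}
    (hs : C ∈ s.invtSubmodule) (hq : C ∈ q.invtSubmodule)
    (htrace : ∀ x ∈ C, ∑ j ∈ range p, (s ^ j) (q ((s ^ (p - j)) x)) = x)
    (hds : ∀ x, d (s x) = s (d x)) (hdd : ∀ x, d (d x) = 0) (hd : C' ≤ C.comap d)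
    {k : ℕ} {x y : X} (hx : x ∈ C) (hxy : d y = cyclicDiff p s k x)
    (hy : y ∈ LinearMap.range d ⊔ C'.map (cyclicDiff p s (k + 2))) :
    x ∈ LinearMap.range d ⊔ C.map (cyclicDiff p s (k + 1)) := by
  obtain ⟨_, ⟨a, rfl⟩, _, ⟨b, hb, rfl⟩, rfl⟩ := Submodule.mem_sup.1 hy
  have hker : cyclicDiff p s k (x - d b) = 0 := by
    rw [map_sub, ← hxy, map_add, hdd, zero_add, cyclicDiff_add_two,
      map_cyclicDiff_apply d (Module.End.invtSubmodule.top_mem s) (fun x _ => hds x) k trivial,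
      sub_self]
  obtain ⟨c, hc, hcx⟩ := exists_cyclicDiff_succ_eq hs hq htrace k (sub_mem hx (hd hb)) hker
  exact Submodule.mem_sup.2 ⟨d b, ⟨b, rfl⟩, _, ⟨c, hc, rfl⟩, by rw [hcx, add_sub_cancel]⟩

end CyclicDiff

/-! ### Coloured labels -/

section ColouredChains

variable {R κ : Type*} [CommRing R] {p : ℕ}

/-- Translation of the `ZMod p`-coordinate of a coloured label. -/
def labelShift (t : ZMod p) (v : κ × ZMod p) : κ × ZMod p :=
  (v.1, v.2 + t)

lemma labelShift_zero : (labelShift 0 : κ × ZMod p → κ × ZMod p) = id := by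
  funext v
  simp [labelShift]

lemma labelShift_comp_labelShift (s t : ZMod p) :
    (labelShift s ∘ labelShift t : κ × ZMod p → κ × ZMod p) = labelShift (t + s) := by
  funext v
  simp [labelShift, add_assoc]

/-- A list of coloured labels has no two different labels of the same colour, that is, it is a
simplex of the join of copies of `ZMod p` indexed by the colours. -/
def ColourInjective (l : List (κ × ZMod p)) : Prop :=
  {x | x ∈ l}.InjOn Prod.fst

lemma ColourInjective.map_labelShift {l : List (κ × ZMod p)} (hl : ColourInjective l) (t : ZMod p) :
    ColourInjective (l.map (labelShift t)) := by
  rintro _ hx _ hy hxy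
  obtain ⟨a, ha, rfl⟩ := List.mem_map.1 hx
  obtain ⟨b, hb, rfl⟩ := List.mem_map.1 hy
  rw [hl ha hb hxy]

lemma ColourInjective.not_nodup [Fintype κ] {l : List (κ × ZMod p)} (hl : ColourInjective l)
    (hlen : Fintype.card κ < l.length) : ¬ l.Nodup := fun hnd =>
  hlen.not_ge <| by
    simpa using (List.Nodup.map_on (fun x hx y hy => hl hx hy) hnd).length_le_card

variable (R κ p) in
/-- The oriented chains, with `k` vertices in each simplex, of the join of copies of `ZMod p`
indexed by the colours. -/
noncomputable def colouredChains (k : ℕ) :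
    Submodule R (ExteriorAlgebra R (κ × ZMod p →₀ R)) :=
  (Finsupp.supported R R {l | l.length = k ∧ ColourInjective l}).map wedge

/-- The translation by `1 : ZMod p` of oriented chains of coloured labels. -/
noncomputable def orientedShift : Module.End R (ExteriorAlgebra R (κ × ZMod p →₀ R)) :=
  (orientedMap (labelShift 1)).toLinearMap

lemma colouredChains_le_iff {k : ℕ} {C : Submodule R (ExteriorAlgebra R (κ × ZMod p →₀ R))} :
    colouredChains R κ p k ≤ C ↔ ∀ l : List (κ × ZMod p), l.length = k → ColourInjective l →
      wedge (Finsupp.single l (1 : R)) ∈ C := by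
  rw [colouredChains, Finsupp.supported_eq_span_single, Submodule.map_span, Submodule.span_le]
  simp only [Set.subset_def, Set.forall_mem_image, Set.mem_ofPred_eq, and_imp, SetLike.mem_coe]

lemma wedge_single_mem_colouredChains {l : List (κ × ZMod p)} (hl : ColourInjective l) :
    wedge (Finsupp.single l (1 : R)) ∈ colouredChains R κ p l.length :=
  colouredChains_le_iff.1 le_rfl l rfl hl

lemma colouredChains_eq_bot [Fintype κ] {k : ℕ} (hk : Fintype.card κ < k) :
    colouredChains R κ p k = ⊥ := by
  refine le_bot_iff.1 (colouredChains_le_iff.2 fun l hl hinj => ?_)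
  exact wedge_single_of_not_nodup (hinj.not_nodup (hl ▸ hk))

lemma orientedBoundary_mem_colouredChains (k : ℕ) :
    colouredChains R κ p (k + 1) ≤ (colouredChains R κ p k).comap orientedBoundary := by
  refine colouredChains_le_iff.2 fun l hl hinj => ?_
  rw [Submodule.mem_comap, orientedBoundary_wedge, chainBoundary_single, one_smul]
  refine Submodule.mem_map_of_mem (Finsupp.supported_mono ?_ (listBoundary_mem_supported l))
  exact fun m hm => ⟨by grind, hinj.mono hm.2⟩

lemma orientedShift_wedge (z : List (κ × ZMod p) →₀ R) :
    orientedShift (wedge z) = wedge (chainMap (labelShift 1) z) :=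
  orientedMap_wedge _ z

lemma orientedShift_pow_wedge_single (j : ℕ) (l : List (κ × ZMod p)) :
    (orientedShift ^ j) (wedge (Finsupp.single l (1 : R))) =
      wedge (Finsupp.single (l.map (labelShift (j : ZMod p))) 1) := by
  induction j with
  | zero => simp [labelShift_zero]
  | succ j ih =>
    rw [pow_succ', Module.End.mul_apply, ih, orientedShift_wedge, chainMap_single, List.map_map,
      labelShift_comp_labelShift, Nat.cast_succ]

lemma colouredChains_mem_invtSubmodule_orientedShift (k : ℕ) :
    colouredChains R κ p k ∈ (orientedShift (R := R) (κ := κ) (p := p)).invtSubmodule := by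
  refine colouredChains_le_iff.2 fun l hl hinj => ?_
  rw [Submodule.mem_comap, orientedShift_wedge, chainMap_single]
  simpa [hl] using wedge_single_mem_colouredChains (R := R) (hinj.map_labelShift 1)

lemma orientedBoundary_orientedShift (x : ExteriorAlgebra R (κ × ZMod p →₀ R)) :
    orientedBoundary (orientedShift x) = orientedShift (orientedBoundary x) :=
  orientedBoundary_orientedMap _ x

lemma orientedShift_pow_algebraMap (j : ℕ) (r : R) :
    (orientedShift ^ j) (algebraMap R (ExteriorAlgebra R (κ × ZMod p →₀ R)) r) =
      algebraMap R _ r := by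
  rw [Module.End.pow_apply]
  exact Function.iterate_fixed (AlgHom.commutes _ r) j

lemma orientedBoundary_mem_one_of_mem_colouredChains :
    colouredChains R κ p 1 ≤ (1 : Submodule R _).comap orientedBoundary := by
  refine colouredChains_le_iff.2 fun l hl _ => ?_
  obtain ⟨a, rfl⟩ := List.length_eq_one_iff.1 hl
  rw [Submodule.mem_comap, orientedBoundary_wedge, chainBoundary_single, one_smul]
  simp [listBoundary, wedge_single_nil]

lemma wedge_single_singleton_notMem (v : κ × ZMod p) [Fact (1 < p)] :
    wedge (Finsupp.single [v] (1 : ZMod p)) ∉ LinearMap.range orientedBoundary ⊔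
      (colouredChains (ZMod p) κ p 1).map (cyclicDiff p orientedShift 1) := by
  have hle : LinearMap.range orientedBoundary ⊔
      (colouredChains (ZMod p) κ p 1).map (cyclicDiff p orientedShift 1) ≤
      LinearMap.ker orientedBoundary := by
    refine sup_le ?_ (Submodule.map_le_iff_le_comap.2 fun x hx => ?_)
    · rintro _ ⟨x, rfl⟩
      exact orientedBoundary_orientedBoundary x
    · obtain ⟨r, hr⟩ := Submodule.mem_one.1 (orientedBoundary_mem_one_of_mem_colouredChains hx)
      rw [Submodule.mem_comap, LinearMap.mem_ker, map_cyclicDiff_apply orientedBoundary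
        (Module.End.invtSubmodule.top_mem _) (fun x _ => orientedBoundary_orientedShift x) 1
        trivial, ← hr]
      simp only [cyclicDiff, Nat.not_even_one, if_false, LinearMap.sum_apply,
        orientedShift_pow_algebraMap, sum_const, card_range, nsmul_eq_mul]
      rw [← map_natCast (algebraMap (ZMod p) _), CharP.cast_eq_zero, map_zero, zero_mul]
  intro hv
  have h0 : orientedBoundary (wedge (Finsupp.single [v] (1 : ZMod p))) = 0 := hle hv
  simp [orientedBoundary_wedge, listBoundary, wedge_single_nil] at h0

variable [LinearOrder κ]

lemma exists_forall_fst_le {l : List (κ × ZMod p)} (hl : l ≠ []) :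
    ∃ a ∈ l, ∀ x ∈ l, a.1 ≤ x.1 :=
  Set.exists_min_image {x | x ∈ l} Prod.fst (List.finite_toSet l) (List.exists_mem_of_ne_nil l hl)

variable [Fintype κ]

/-- The projection onto the simplices whose vertex of least colour has label `0`. The translates of
these simplices form a basis of the coloured chains. -/
noncomputable def leastZeroProj : Module.End R (ExteriorAlgebra R (κ × ZMod p →₀ R)) :=
  ∑ c : κ, LinearMap.mulLeft R (ExteriorAlgebra.ι R (Finsupp.single (c, 0) 1)) ∘ₗ
    CliffordAlgebra.contractLeft (Finsupp.lapply (c, 0)) ∘ₗ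
      (orientedRestrict {x | c ≤ x.1}).toLinearMap

lemma leastZeroProj_wedge_single {l : List (κ × ZMod p)} (hl : ColourInjective l)
    {a : κ × ZMod p} (ha : a ∈ l) (hmin : ∀ x ∈ l, a.1 ≤ x.1) :
    leastZeroProj (wedge (Finsupp.single l (1 : R))) =
      if a.2 = 0 then wedge (Finsupp.single l 1) else 0 := by
  have hsummand (c : κ) : LinearMap.mulLeft R (ExteriorAlgebra.ι R (Finsupp.single (c, 0) 1))
      (CliffordAlgebra.contractLeft (Finsupp.lapply (c, 0))
        (orientedRestrict {x | c ≤ x.1} (wedge (Finsupp.single l (1 : R))))) =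
      if (c, 0) ∈ l ∧ ∀ x ∈ l, c ≤ x.1 then wedge (Finsupp.single l 1) else 0 := by
    rw [orientedRestrict_wedge_single]
    by_cases hc : ∀ x ∈ l, x ∈ {x : κ × ZMod p | c ≤ x.1}
    · rw [if_pos hc, LinearMap.mulLeft_apply, ι_single_mul_contractLeft_wedge_single]
      grind
    · rw [if_neg hc, map_zero, map_zero, if_neg fun h => hc h.2]
  have hiff : (a.1, 0) ∈ l ↔ a.2 = 0 :=
    ⟨fun h => congr_arg Prod.snd (hl ha h rfl), fun h => h ▸ ha⟩
  simp only [leastZeroProj, LinearMap.sum_apply, LinearMap.comp_apply, AlgHom.toLinearMap_apply,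
    hsummand]
  rw [Fintype.sum_eq_single a.1 fun c hc => if_neg fun h =>
    hc (le_antisymm (h.2 a ha) (hmin _ h.1))]
  exact if_congr ((and_iff_left hmin).trans hiff) rfl rfl

lemma colouredChains_mem_invtSubmodule_leastZeroProj (k : ℕ) :
    colouredChains R κ p (k + 1) ∈ (leastZeroProj (R := R) (κ := κ) (p := p)).invtSubmodule := by
  refine colouredChains_le_iff.2 fun l hl hinj => ?_
  obtain ⟨a, ha, hmin⟩ := exists_forall_fst_le (List.ne_nil_of_length_eq_add_one hl)
  rw [Submodule.mem_comap, leastZeroProj_wedge_single hinj ha hmin]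
  split_ifs
  · exact hl ▸ wedge_single_mem_colouredChains hinj
  · exact zero_mem _

lemma sum_orientedShift_leastZeroProj [NeZero p] (k : ℕ) {x : ExteriorAlgebra R (κ × ZMod p →₀ R)}
    (hx : x ∈ colouredChains R κ p (k + 1)) :
    ∑ j ∈ range p, (orientedShift ^ j) (leastZeroProj ((orientedShift ^ (p - j)) x)) = x := by
  suffices colouredChains R κ p (k + 1) ≤ LinearMap.eqLocus
      (∑ j ∈ range p, (orientedShift ^ j) ∘ₗ leastZeroProj ∘ₗ (orientedShift ^ (p - j)))
      LinearMap.id by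
    simpa [LinearMap.sum_apply] using this hx
  refine colouredChains_le_iff.2 fun l hl hinj => ?_
  obtain ⟨a, ha, hmin⟩ := exists_forall_fst_le (List.ne_nil_of_length_eq_add_one hl)
  have hterm {j : ℕ} (hj : j < p) :
      (orientedShift ^ j) (leastZeroProj ((orientedShift ^ (p - j))
        (wedge (Finsupp.single l (1 : R))))) =
      if j = a.2.val then wedge (Finsupp.single l 1) else 0 := by
    have hcast : ((p - j : ℕ) : ZMod p) = -j := by simp [Nat.cast_sub hj.le]
    have hzero : a.2 + -j = 0 ↔ j = a.2.val := by
      rw [← sub_eq_add_neg, sub_eq_zero, ← ZMod.val_injective p |>.eq_iff, ZMod.val_cast_of_lt hj,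
        eq_comm]
    rw [orientedShift_pow_wedge_single, hcast,
      leastZeroProj_wedge_single (a := labelShift (-(j : ZMod p)) a) (hinj.map_labelShift _)
        (List.mem_map_of_mem ha) (List.forall_mem_map.2 hmin)]
    simp only [labelShift, hzero]
    split_ifs
    · simp [orientedShift_pow_wedge_single, labelShift_comp_labelShift, labelShift_zero]
    · exact map_zero _
  simp [sum_congr rfl fun _ hj => hterm (mem_range.1 hj), ZMod.val_lt]

/-- Up to dimension `n`, the chains `ω k` are the image of a resolution of the trivial module over
the cyclic group. The class of `ω 0` cannot vanish, but if there were at most `n` colours, `ω n`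
would be zero and the vanishing would propagate down the staircase. -/
theorem lt_card_of_orientedBoundary_eq_cyclicDiff [Fact (1 < p)] {n : ℕ} {v : κ × ZMod p}
    {ω : ℕ → ExteriorAlgebra (ZMod p) (κ × ZMod p →₀ ZMod p)}
    (hω : ∀ k ≤ n, ω k ∈ colouredChains (ZMod p) κ p (k + 1))
    (hv : ω 0 = wedge (Finsupp.single [v] 1))
    (hd : ∀ k < n, orientedBoundary (ω (k + 1)) = cyclicDiff p orientedShift k (ω k)) :
    n < Fintype.card κ := by
  have : NeZero p := ⟨(Fact.out : 1 < p).ne_bot⟩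
  by_contra! hn
  have hmem (k : ℕ) (hk : k ≤ n) : ω k ∈ LinearMap.range orientedBoundary ⊔
      (colouredChains (ZMod p) κ p (k + 1)).map (cyclicDiff p orientedShift (k + 1)) := by
    induction hk using Nat.decreasingInduction with
    | self =>
      have h0 := hω n le_rfl
      rw [colouredChains_eq_bot (by omega), Submodule.mem_bot] at h0
      exact h0 ▸ zero_mem _
    | of_succ k hk ih =>
      exact mem_range_sup_map_cyclicDiff (colouredChains_mem_invtSubmodule_orientedShift _)
        (colouredChains_mem_invtSubmodule_leastZeroProj k)
        (fun x hx => sum_orientedShift_leastZeroProj k hx) orientedBoundary_orientedShift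
        orientedBoundary_orientedBoundary (orientedBoundary_mem_colouredChains _)
        (hω k hk.le) (hd k hk) ih
  exact wedge_single_singleton_notMem v (hv ▸ hmem 0 n.zero_le)

end ColouredChains

/-! ### Small chains -/

section SmallChains

variable {R X Y : Type*} [CommRing R] [PseudoMetricSpace X] [PseudoMetricSpace Y]

/-- The lists of `m` points of `A` at mutual distance at most `δ`. -/
def smallLists (A : Set X) (δ : ℝ) (m : ℕ) : Set (List X) :=
  {l | l.length = m ∧ (∀ x ∈ l, x ∈ A) ∧ ∀ x ∈ l, ∀ y ∈ l, dist x y ≤ δ}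

lemma map_mem_smallLists {A : Set X} {B : Set Y} {f : X → Y} (hf : Set.MapsTo f A B)
    (hf1 : LipschitzWith 1 f) {δ : ℝ} {m : ℕ} :
    Set.MapsTo (List.map f) (smallLists A δ m) (smallLists B δ m) := by
  rintro l ⟨hlen, hmem, hdist⟩
  refine ⟨by simpa using hlen, List.forall_mem_map.2 fun x hx => hf (hmem x hx), ?_⟩
  simp only [List.forall_mem_map]
  exact fun x hx y hy => (hf1.dist_le_mul x y).trans (by simpa using hdist x hx y hy)

lemma chainPrism_mem_supported_smallLists {A : Set X} {B : Set Y} {f g : X → Y}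
    (hf : Set.MapsTo f A B) (hg : Set.MapsTo g A B)
    (hf1 : LipschitzWith 1 f) (hg1 : LipschitzWith 1 g) {δ τ : ℝ} {m : ℕ}
    (hτ : 0 ≤ τ) (hfg : ∀ x ∈ A, dist (f x) (g x) ≤ τ) {z : List X →₀ R}
    (hz : z ∈ Finsupp.supported R R (smallLists A δ m)) :
    chainPrism f g z ∈ Finsupp.supported R R (smallLists B (δ + τ) (m + 1)) := by
  refine map_mem_of_mem_supported (fun l hl => ?_) hz
  obtain ⟨hlen, hmem, hdist⟩ := hl
  rw [chainPrism_single, one_smul]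
  refine Finsupp.supported_mono ?_ (listPrism_mem_supported f g l)
  rintro q ⟨hqlen, hq⟩
  refine ⟨by rw [hqlen, hlen], fun x hx => ?_, fun x hx y hy => ?_⟩
  · obtain ⟨a, ha, rfl | rfl⟩ := hq x hx
    · exact hf (hmem a ha)
    · exact hg (hmem a ha)
  · obtain ⟨a, ha, hxa⟩ := hq x hx
    obtain ⟨b, hb, hyb⟩ := hq y hy
    have hab := hdist a ha b hb
    have hfab : dist (f a) (f b) ≤ dist a b := by simpa using hf1.dist_le_mul a b
    have hgab : dist (g a) (g b) ≤ dist a b := by simpa using hg1.dist_le_mul a b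
    have hfgb := hfg b (hmem b hb)
    rcases hxa with rfl | rfl <;> rcases hyb with rfl | rfl
    · linarith
    · linarith [dist_triangle (f a) (f b) (g b)]
    · linarith [dist_triangle (g a) (g b) (f b), dist_comm (f b) (g b)]
    · linarith

lemma chainCons_chainMap_const_mem_supported_smallLists {A : Set X} {B : Set Y} {w : Y}
    (hw : w ∈ B) {δ ε : ℝ} (hε : 0 ≤ ε) {m : ℕ} {z : List X →₀ R}
    (hz : z ∈ Finsupp.supported R R (smallLists A δ m)) :
    chainCons w (chainMap (fun _ => w) z) ∈ Finsupp.supported R R (smallLists B ε (m + 1)) := by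
  refine map_mem_of_mem_supported (F := chainCons w ∘ₗ chainMap fun _ => w) (fun l hl => ?_) hz
  rw [LinearMap.comp_apply, chainMap_single, chainCons_single]
  have hconst : ∀ x ∈ w :: l.map fun _ => w, x = w := by simp
  refine Finsupp.single_mem_supported R 1
    ⟨by simp [hl.1], fun x hx => hconst x hx ▸ hw, fun x hx y hy => ?_⟩
  rwa [hconst x hx, hconst y hy, dist_self]

lemma chainBoundary_sum_chainPrism {V W : Type*} (h : ℕ → V → W) {z : List V →₀ R}
    (hz : chainBoundary z = 0) (N : ℕ) :
    chainBoundary (∑ i ∈ range N, chainPrism (h i) (h (i + 1)) z) =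
      chainMap (h N) z - chainMap (h 0) z := by
  simp only [map_sum, chainBoundary_chainPrism, hz, map_zero, sub_zero]
  exact sum_range_sub (fun i => chainMap (h i) z) N

lemma exists_mem_supported_smallLists_inter_closedBall {A : Set X} {δ : ℝ} {m : ℕ}
    {z : List X →₀ R} (hz : z ∈ Finsupp.supported R R (smallLists A δ m)) (w : X) :
    ∃ D, z ∈ Finsupp.supported R R (smallLists (A ∩ Metric.closedBall w D) δ m) := by
  have hfin : (⋃ l ∈ z.support, {x | x ∈ l}).Finite :=
    z.support.finite_toSet.biUnion fun l _ => l.finite_toSet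
  obtain ⟨D, hD⟩ := hfin.isBounded.subset_closedBall w
  refine ⟨D, fun l hl => ?_⟩
  obtain ⟨hlen, hmem, hdist⟩ := hz hl
  exact ⟨hlen, fun x hx => ⟨hmem x hx, hD (Set.mem_biUnion hl hx)⟩, hdist⟩

variable {E : Type*} [SeminormedAddCommGroup E] [NormedSpace ℝ E]

lemma lipschitzWith_one_lineMap (w : E) {t : ℝ} (ht : t ∈ Set.Icc (0 : ℝ) 1) :
    LipschitzWith 1 fun x : E => AffineMap.lineMap x w t := by
  refine LipschitzWith.of_dist_le_mul fun x y => ?_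
  rw [dist_eq_norm, dist_eq_norm, AffineMap.lineMap_apply_module, AffineMap.lineMap_apply_module,
    add_sub_add_right_eq_sub, ← smul_sub, norm_smul, Real.norm_of_nonneg (sub_nonneg.2 ht.2)]
  exact mul_le_mul_of_nonneg_right (by simpa using ht.1) (norm_nonneg _)

/-- The cycle is pushed towards `w` in small steps. -/
lemma exists_chainBoundary_eq_of_segment_subset {A B : Set E} {w : E} (hw : w ∈ B)
    (hB : ∀ x ∈ A, segment ℝ x w ⊆ B) {δ τ : ℝ} (hδ : 0 ≤ δ) (hτ : 0 < τ) {m : ℕ}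
    {z : List E →₀ R} (hz : z ∈ Finsupp.supported R R (smallLists A δ m))
    (hz0 : chainBoundary z = 0) :
    ∃ y ∈ Finsupp.supported R R (smallLists B (δ + τ) (m + 1)), chainBoundary y = z := by
  obtain ⟨D, hzD⟩ := exists_mem_supported_smallLists_inter_closedBall hz w
  obtain ⟨N, hDN⟩ := exists_nat_gt (D / τ)
  let h (i : ℕ) (x : E) : E := AffineMap.lineMap x w ((i : ℝ) / (N + 1))
  have hIcc {i : ℕ} (hi : i ≤ N + 1) : (i : ℝ) / (N + 1) ∈ Set.Icc (0 : ℝ) 1 :=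
    ⟨by positivity, by rw [div_le_one (by positivity)]; exact_mod_cast hi⟩
  have hmaps {i : ℕ} (hi : i ≤ N + 1) : Set.MapsTo (h i) (A ∩ Metric.closedBall w D) B :=
    fun x hx => hB x hx.1 (segment_eq_image_lineMap ℝ x w ▸ Set.mem_image_of_mem _ (hIcc hi))
  have hlip {i : ℕ} (hi : i ≤ N + 1) : LipschitzWith 1 (h i) :=
    lipschitzWith_one_lineMap w (hIcc hi)
  have hstep (i : ℕ) : ∀ x ∈ A ∩ Metric.closedBall w D, dist (h i x) (h (i + 1) x) ≤ τ := by
    intro x hx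
    have hdiff : (i : ℝ) / (N + 1) - ((i + 1 : ℕ) : ℝ) / (N + 1) = -(1 / (N + 1)) := by
      push_cast; ring
    rw [dist_lineMap_lineMap, Real.dist_eq, hdiff, abs_neg, abs_of_pos (by positivity),
      one_div_mul_eq_div, div_le_iff₀ (by positivity)]
    rw [div_lt_iff₀ hτ] at hDN
    linarith [Metric.mem_closedBall.1 hx.2]
  refine ⟨chainCons w (chainMap (fun _ => w) z) -
    ∑ i ∈ range (N + 1), chainPrism (h i) (h (i + 1)) z, sub_mem ?_ (sum_mem fun i hi => ?_), ?_⟩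
  · exact chainCons_chainMap_const_mem_supported_smallLists hw (by positivity) hz
  · rw [mem_range] at hi
    exact chainPrism_mem_supported_smallLists (hmaps hi.le) (hmaps hi) (hlip hi.le) (hlip hi) hτ.le
      (hstep i) hzD
  · have h0 : h 0 = id := by funext x; simp [h]
    have hN : h (N + 1) = fun _ => w := by
      funext x
      simp [h, div_self (N.cast_add_one_ne_zero (R := ℝ))]
    rw [map_sub, chainBoundary_chainCons, chainBoundary_chainMap, hz0, map_zero, map_zero, sub_zero,
      chainBoundary_sum_chainPrism h hz0, h0, hN, chainMap_id, LinearMap.id_apply, sub_sub_cancel]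

/-- An equivariant filtration with `n` steps, each of which is swept out by a cone over the previous
one, so that the whole space behaves like an `n`-connected one. -/
structure IsEquivariantTower (s : E → E) (P : ℕ → Set E) (n : ℕ) : Prop where
  nonempty : (P 0).Nonempty
  mapsTo : ∀ k ≤ n, Set.MapsTo s (P k) (P k)
  cone : ∀ k < n, ∃ w ∈ P (k + 1), ∀ x ∈ P k, segment ℝ x w ⊆ P (k + 1)

lemma IsEquivariantTower.subset {s : E → E} {P : ℕ → Set E} {n : ℕ}
    (hP : IsEquivariantTower s P n) {k : ℕ} (hk : k ≤ n) : P k ⊆ P n := by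
  induction hk using Nat.decreasingInduction with
  | self => exact subset_rfl
  | of_succ k hk ih =>
    obtain ⟨w, -, hw⟩ := hP.cone k hk
    exact fun x hx => ih (hw x hx (left_mem_segment ℝ x w))

lemma chainBoundary_cyclicDiff_chainMap {V : Type*} {s : V → V} {p : ℕ} (hs : s^[p] = id) {k : ℕ}
    {y z : List V →₀ R} (hyz : chainBoundary y = cyclicDiff p (chainMap s : Module.End R _) k z) :
    chainBoundary (cyclicDiff p (chainMap s : Module.End R _) (k + 1) y) = 0 := by
  have hpow : (chainMap s : Module.End R (List V →₀ R)) ^ p = 1 := by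
    rw [chainMap_pow, hs, chainMap_id]; rfl
  have hcomm : chainBoundary (cyclicDiff p (chainMap s : Module.End R _) (k + 1) y) =
      cyclicDiff p (chainMap s : Module.End R _) (k + 1) (chainBoundary y) :=
    map_cyclicDiff_apply (R := R) (s := chainMap s) (u := chainMap s)
      chainBoundary (Module.End.invtSubmodule.top_mem _)
      (fun x _ => chainBoundary_chainMap s x) (k + 1) trivial
  rw [hcomm, hyz, ← Module.End.mul_apply, cyclicDiff_succ_mul_cyclicDiff hpow,
    LinearMap.zero_apply]

/-- The chains `z k` are the image in the tower of a partial resolution of the trivial module over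
the cyclic group of order `p`. -/
lemma IsEquivariantTower.exists_chains {s : E → E} {P : ℕ → Set E} {n p : ℕ}
    (hP : IsEquivariantTower s P n) (hs : s^[p] = id) (hs1 : LipschitzWith 1 s) {τ : ℝ}
    (hτ : 0 < τ) :
    ∃ z : ℕ → List E →₀ R, (∃ x, z 0 = Finsupp.single [x] 1) ∧
      (∀ k ≤ n, z k ∈ Finsupp.supported R R (smallLists (P k) (k * τ) (k + 1))) ∧
      ∀ k < n, chainBoundary (z (k + 1)) = cyclicDiff p (chainMap s : Module.End R _) k (z k) := by
  let Good (k : ℕ) (z : List E →₀ R) : Prop :=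
    z ∈ Finsupp.supported R R (smallLists (P k) (k * τ) (k + 1)) ∧
      chainBoundary (cyclicDiff p (chainMap s : Module.End R _) k z) = 0
  have hstep (k : ℕ) (z : List E →₀ R) : ∃ y, k < n → Good k z →
      Good (k + 1) y ∧ chainBoundary y = cyclicDiff p (chainMap s : Module.End R _) k z := by
    by_cases hk : k < n ∧ Good k z
    · obtain ⟨hk, hz, hz0⟩ := hk
      obtain ⟨w, hw, hcone⟩ := hP.cone k hk
      obtain ⟨y, hy, hyz⟩ := exists_chainBoundary_eq_of_segment_subset hw hcone (by positivity) hτ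
        (cyclicDiff_apply_mem (fun x hx => lmapDomain_mem_supported
          (map_mem_smallLists (hP.mapsTo k hk.le) hs1) hx) k hz) hz0
      exact ⟨y, fun _ _ => ⟨⟨by push_cast; rwa [add_one_mul],
        chainBoundary_cyclicDiff_chainMap hs hyz⟩, hyz⟩⟩
    · exact ⟨0, fun h₁ h₂ => absurd ⟨h₁, h₂⟩ hk⟩
  choose next hnext using hstep
  obtain ⟨x, hx⟩ := hP.nonempty
  let z (k : ℕ) : List E →₀ R := Nat.rec (Finsupp.single [x] 1) next k
  have hgood (k : ℕ) (hk : k ≤ n) : Good k (z k) := by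
    induction k with
    | zero =>
      refine ⟨Finsupp.single_mem_supported R 1 ⟨rfl, by simpa using hx, by simp⟩, ?_⟩
      simp [cyclicDiff, z, listBoundary]
    | succ k ih => exact (hnext k _ hk (ih (by omega))).1
  exact ⟨z, ⟨x, rfl⟩, fun k hk => (hgood k hk).1, fun k hk => (hnext k _ hk (hgood k hk.le)).2⟩

end SmallChains

/-! ### The Borsuk–Ulam theorem for a cyclic group -/

section BorsukUlam

lemma map_mapsTo_colourInjective {X κ : Type*} [PseudoMetricSpace X] {p : ℕ} {A : Set X} {δ : ℝ}
    {lam : X → κ × ZMod p}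
    (hlam : ∀ x ∈ A, ∀ y ∈ A, dist x y ≤ δ → (lam x).1 = (lam y).1 → lam x = lam y) (m : ℕ) :
    Set.MapsTo (List.map lam) (smallLists A δ m) {l | l.length = m ∧ ColourInjective l} := by
  rintro l ⟨hlen, hmem, hdist⟩
  refine ⟨by simpa using hlen, ?_⟩
  rintro _ hx _ hy hxy
  obtain ⟨a, ha, rfl⟩ := List.mem_map.1 hx
  obtain ⟨b, hb, rfl⟩ := List.mem_map.1 hy
  exact hlam a (hmem a ha) b (hmem b hb) (hdist a ha b hb) hxy

lemma wedge_chainMap_chainMap_eq_orientedShift {R V κ : Type*} [CommRing R] {p : ℕ} {A : Set V}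
    {s : V → V} {lam : V → κ × ZMod p} (hlam : ∀ x ∈ A, lam (s x) = labelShift 1 (lam x))
    {z : List V →₀ R} (hz : z ∈ Finsupp.supported R R {l | ∀ a ∈ l, a ∈ A}) :
    wedge (chainMap lam (chainMap s z)) = orientedShift (wedge (chainMap lam z)) := by
  refine eq_of_mem_supported (F := wedge ∘ₗ chainMap lam ∘ₗ chainMap s)
    (G := orientedShift ∘ₗ wedge ∘ₗ chainMap lam) (fun l hl => ?_) hz
  have hmap : (l.map s).map lam = (l.map lam).map (labelShift 1) := by
    rw [List.map_map, List.map_map]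
    exact List.map_congr_left fun a ha => hlam a (hl a ha)
  simp only [LinearMap.comp_apply, chainMap_single, orientedShift_wedge, hmap]

variable {E κ : Type*} [SeminormedAddCommGroup E] [NormedSpace ℝ E] [Fintype κ] {n p : ℕ}
  {s : E → E} {P : ℕ → Set E}

/-- **Borsuk–Ulam theorem for `ZMod p`**, in the form of Tucker's lemma. -/
theorem IsEquivariantTower.exists_close_ne_label [Fact (1 < p)] (hP : IsEquivariantTower s P n)
    (hs : s^[p] = id) (hs1 : LipschitzWith 1 s) (hκ : Fintype.card κ ≤ n) {colour : E → κ}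
    {label : E → ZMod p} (hcolour : ∀ x ∈ P n, colour (s x) = colour x)
    (hlabel : ∀ x ∈ P n, label (s x) = label x + 1) {η : ℝ} (hη : 0 < η) :
    ∃ x ∈ P n, ∃ y ∈ P n, dist x y < η ∧ colour x = colour y ∧ label x ≠ label y := by
  by_contra! hsep
  let _ : LinearOrder κ := LinearOrder.lift' _ (Fintype.equivFin κ).injective
  let lam (x : E) : κ × ZMod p := (colour x, label x)
  obtain ⟨z, ⟨x₀, hz₀⟩, hz, hdz⟩ :=
    hP.exists_chains (R := ZMod p) hs hs1 (τ := η / (n + 1)) (by positivity)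
  have hsmall {k : ℕ} (hk : k ≤ n) : k * (η / (n + 1)) < η := by
    rw [← mul_div_assoc, div_lt_iff₀ (by positivity), mul_comm]
    gcongr
    exact_mod_cast Nat.lt_succ_of_le hk
  have hinj {k : ℕ} (hk : k ≤ n) := map_mapsTo_colourInjective (lam := lam) (A := P k)
    (δ := k * (η / (n + 1))) (fun x hx y hy hxy hc => Prod.ext hc
      (hsep x (hP.subset hk hx) y (hP.subset hk hy) (hxy.trans_lt (hsmall hk)) hc)) (k + 1)
  let V : Submodule (ZMod p) (List E →₀ ZMod p) := Finsupp.supported _ _ {l | ∀ a ∈ l, a ∈ P n}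
  let F := wedge ∘ₗ chainMap (R := ZMod p) lam
  have hmaps : Set.MapsTo (List.map s) {l | ∀ a ∈ l, a ∈ P n} {l | ∀ a ∈ l, a ∈ P n} :=
    fun l hl => List.forall_mem_map.2 fun a ha => hP.mapsTo n le_rfl (hl a ha)
  have hV : V ∈ Module.End.invtSubmodule (chainMap s) :=
    fun x hx => lmapDomain_mem_supported hmaps hx
  have hF : ∀ x ∈ V, F (chainMap s x) = orientedShift (F x) := fun x hx =>
    wedge_chainMap_chainMap_eq_orientedShift
      (fun x hx => Prod.ext (hcolour x hx) (hlabel x hx)) hx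
  refine (lt_card_of_orientedBoundary_eq_cyclicDiff (n := n) (v := lam x₀) (ω := fun k => F (z k))
    (fun k hk => ?_) (by simp [F, hz₀]) fun k hk => ?_).not_ge hκ
  · exact Submodule.mem_map_of_mem (lmapDomain_mem_supported (hinj hk) (hz k hk))
  · have hsub : smallLists (P k) (k * (η / (n + 1))) (k + 1) ⊆ {l | ∀ a ∈ l, a ∈ P n} :=
      fun l hl a ha => hP.subset hk.le (hl.2.1 a ha)
    have hzV : z k ∈ V := Finsupp.supported_mono hsub (hz k hk.le)
    rw [← map_cyclicDiff_apply F hV hF k hzV, ← hdz k hk]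
    simp only [F, LinearMap.comp_apply, orientedBoundary_wedge, chainBoundary_chainMap]

end BorsukUlam

section MultivaluedLabels

variable {E κ T : Type*} [SeminormedAddCommGroup E] [NormedSpace ℝ E] [Fintype κ] {n p : ℕ}
  [Fact p.Prime]

lemma natCast_eq_of_iterate_eq_iterate {σ : T → T} {τ : T} (hper : Function.IsPeriodicPt σ p τ)
    (hfix : ¬ Function.IsFixedPt σ τ) {i j : ℕ} (hij : σ^[i] τ = σ^[j] τ) :
    (i : ZMod p) = j := by
  have hmod (k : ℕ) : k % p < Function.minimalPeriod σ τ := by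
    rw [Function.minimalPeriod_eq_prime hper hfix]
    exact Nat.mod_lt k (Fact.out : p.Prime).pos
  rw [ZMod.natCast_eq_natCast_iff',
    ← Function.iterate_eq_iterate_iff_of_lt_minimalPeriod (hmod i) (hmod j),
    hper.iterate_mod_apply, hper.iterate_mod_apply, hij]

variable (p) in
/-- Count the steps to each point from a representative of its orbit. -/
lemma exists_equivariant_label (σ : T → T) :
    ∃ f : T → ZMod p, ∀ τ, Function.IsPeriodicPt σ p τ → ¬ Function.IsFixedPt σ τ →
      f (σ τ) = f τ + 1 := by
  cases isEmpty_or_nonempty T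
  · exact ⟨isEmptyElim, isEmptyElim⟩
  let rep (τ : T) : T := Classical.epsilon (· ∈ Function.periodicOrbit σ τ)
  have hperiodic {τ : T} (hτ : Function.IsPeriodicPt σ p τ) : τ ∈ Function.periodicPts σ :=
    ⟨p, (Fact.out : p.Prime).pos, hτ⟩
  have hrep (τ : T) : ∃ j, Function.IsPeriodicPt σ p τ → σ^[j] τ = rep τ := by
    by_cases hτ : Function.IsPeriodicPt σ p τ
    · obtain ⟨j, hj⟩ := (Function.mem_periodicOrbit_iff (hperiodic hτ)).1
        (Classical.epsilon_spec ⟨τ, Function.self_mem_periodicOrbit (hperiodic hτ)⟩)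
      exact ⟨j, fun _ => hj⟩
    · exact ⟨0, fun h => absurd h hτ⟩
  choose j hj using hrep
  refine ⟨fun τ => -(j τ : ZMod p), fun τ hτ hfix => ?_⟩
  have horbit : rep (σ τ) = rep τ := by
    simp only [rep, Function.periodicOrbit_apply_eq (hperiodic hτ)]
  have hiter : σ^[j (σ τ) + 1] τ = σ^[j τ] τ := by
    rw [Function.iterate_succ_apply, hj (σ τ) hτ.apply, horbit, hj τ hτ]
  have hcast := natCast_eq_of_iterate_eq_iterate hτ hfix hiter
  simp only [← hcast]
  push_cast
  ring

theorem IsEquivariantTower.exists_close_ne_of_forall_exists {s : E → E} {P : ℕ → Set E}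
    (hP : IsEquivariantTower s P n) (hs : s^[p] = id) (hs1 : LipschitzWith 1 s)
    (hκ : Fintype.card κ ≤ n) {σ : T → T} {valid : E → κ → T → Prop}
    (hex : ∀ x ∈ P n, ∃ c τ, valid x c τ)
    (hequiv : ∀ x c τ, valid x c τ → valid (s x) c (σ τ))
    (hfree : ∀ x c τ, valid x c τ → ¬ Function.IsFixedPt σ τ) {η : ℝ} (hη : 0 < η) :
    ∃ x ∈ P n, ∃ y ∈ P n, dist x y < η ∧ ∃ c τ τ', valid x c τ ∧ valid y c τ' ∧ τ ≠ τ' := by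
  by_contra! hsep
  obtain ⟨f, hf⟩ := exists_equivariant_label p σ
  have hself {x : E} (hx : x ∈ P n) {c : κ} {τ τ' : T} : valid x c τ → valid x c τ' → τ = τ' :=
    hsep x hx x hx (by simpa using hη) c τ τ'
  have hiter (j : ℕ) {x : E} {c : κ} {τ : T} (h : valid x c τ) :
      valid (s^[j] x) c (σ^[j] τ) := by
    induction j with
    | zero => exact h
    | succ j ih =>
      rw [Function.iterate_succ_apply', Function.iterate_succ_apply']
      exact hequiv _ _ _ ih
  have hback (x : E) (c : κ) : (∃ τ, valid (s x) c τ) ↔ ∃ τ, valid x c τ := by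
    refine ⟨fun ⟨τ, h⟩ => ⟨σ^[p - 1] τ, ?_⟩, fun ⟨τ, h⟩ => ⟨σ τ, hequiv x c τ h⟩⟩
    have hp : p - 1 + 1 = p := Nat.succ_pred_prime Fact.out
    simpa [← Function.iterate_succ_apply, hp, hs] using hiter (p - 1) h
  obtain ⟨x₀, hx₀⟩ := hP.nonempty
  obtain ⟨c₀, τ₀, -⟩ := hex x₀ (hP.subset n.zero_le hx₀)
  have : Nonempty κ := ⟨c₀⟩
  have : Nonempty T := ⟨τ₀⟩
  let colour (x : E) : κ := Classical.epsilon fun c => ∃ τ, valid x c τ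
  let pattern (x : E) : T := Classical.epsilon (valid x (colour x))
  have hspec (x : E) (hx : x ∈ P n) : valid x (colour x) (pattern x) :=
    Classical.epsilon_spec (Classical.epsilon_spec (hex x hx))
  have hcolour (x : E) : colour (s x) = colour x :=
    congr_arg Classical.epsilon (funext fun c => propext (hback x c))
  have hpattern (x : E) (hx : x ∈ P n) : pattern (s x) = σ (pattern x) :=
    hself (hP.mapsTo n le_rfl hx) (hspec _ (hP.mapsTo n le_rfl hx))
      (hcolour x ▸ hequiv _ _ _ (hspec x hx))
  have hperiodic (x : E) (hx : x ∈ P n) : Function.IsPeriodicPt σ p (pattern x) :=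
    hself hx (by simpa [hs] using hiter p (hspec x hx)) (hspec x hx)
  obtain ⟨x, hx, y, hy, hxy, hc, hne⟩ := hP.exists_close_ne_label hs hs1 hκ
    (label := fun x => f (pattern x)) (fun x _ => hcolour x) (fun x hx => by
      rw [hpattern x hx, hf _ (hperiodic x hx) (hfree _ _ _ (hspec x hx))]) hη
  exact hne (congr_arg f (hsep x hx y hy hxy _ _ _ (hspec x hx) (hc ▸ hspec y hy)))

end MultivaluedLabels

/-! ### Gaps and clusterings -/

section Gaps

variable {ι : Type*} {f g : ι → ℝ} {ε : ℝ}

/-- The set `U` is a superlevel set of `f`, and a gap of length `ε` separates the values of `f` on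
`U` from the others. -/
def HasGap (f : ι → ℝ) (ε : ℝ) (U : Finset ι) : Prop :=
  ∀ a ∈ U, ∀ b ∉ U, f b + ε ≤ f a

lemma HasGap.eq_of_card_eq {U V : Finset ι} (hU : HasGap f ε U) (hV : HasGap g ε V)
    (hcard : #U = #V) (hfg : ∀ a, |f a - g a| < ε) : U = V := by
  by_contra hne
  obtain ⟨a, haU, haV⟩ := not_subset.1 fun h => hne (eq_of_subset_of_card_le h hcard.ge)
  obtain ⟨b, hbV, hbU⟩ := not_subset.1 fun h => hne (eq_of_subset_of_card_le h hcard.le).symm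
  linarith [hU a haU b hbU, hV b hbV a haV, (abs_lt.1 (hfg a)).2, (abs_lt.1 (hfg b)).1]

lemma HasGap.map_equiv {κ : Type*} {U : Finset ι} (hU : HasGap f ε U) (e : ι ≃ κ) :
    HasGap (f ∘ e.symm) ε (U.map e.toEmbedding) := fun _ ha _ hb =>
  hU _ (mem_map_equiv.1 ha) _ fun h => hb (mem_map_equiv.2 h)

lemma exists_pos_forall_add_le [Finite ι] {X κ : Type*} [TopologicalSpace X] [Finite κ] {K : Set X}
    (hK : IsCompact K) {F : X → κ → ι → ℝ} (hF : ContinuousOn F K)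
    (hne : ∀ x ∈ K, ∃ i a b, F x i a ≠ F x i b) :
    ∃ ε > 0, ∀ x ∈ K, ∃ i a b, F x i b + ε ≤ F x i a := by
  have := Fintype.ofFinite ι
  have := Fintype.ofFinite κ
  let G (x : X) (q : κ × ι × ι) : ℝ := F x q.1 q.2.1 - F x q.1 q.2.2
  have hG : ContinuousOn G K := by fun_prop
  obtain ⟨ε, hε, hεG⟩ := hK.exists_forall_le' hG.norm fun x hx => norm_pos_iff.2 fun h0 => by
    obtain ⟨i, a, b, hab⟩ := hne x hx
    exact hab (sub_eq_zero.1 (congrFun h0 (i, a, b)))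
  refine ⟨ε, hε, fun x hx => ?_⟩
  by_contra! hlt
  refine absurd (hεG x hx) (not_le.2 ((pi_norm_lt_iff hε).2 fun q => ?_))
  rw [Real.norm_eq_abs, abs_lt]
  constructor
  · linarith [hlt q.1 q.2.2 q.2.1]
  · linarith [hlt q.1 q.2.1 q.2.2]

variable [Fintype ι]

lemma exists_forall_lt_or_le (v : ι → ℝ) {u : ℕ → ℝ} (hu : Monotone u) :
    ∃ k ≤ Fintype.card ι, ∀ j, v j < u k ∨ u (k + 1) ≤ v j := by
  by_contra! h
  choose g hg using fun k : Fin (Fintype.card ι + 1) => h k (Nat.lt_succ_iff.1 k.2)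
  have hinj : Function.Injective g := Function.Injective.of_lt_imp_ne fun a b hab heq => by
    have hub : u (a + 1) ≤ u b := hu hab
    have hga := (hg a).2
    rw [heq] at hga
    linarith [(hg b).1]
  simpa using Fintype.card_le_of_injective g hinj

lemma exists_hasGap (hε : 0 < ε) {a b : ι} (hab : f b + (Fintype.card ι + 1) * ε ≤ f a) :
    ∃ U : Finset ι, a ∈ U ∧ b ∉ U ∧ HasGap f ε U := by
  obtain ⟨k, hk, hgap⟩ := exists_forall_lt_or_le f (u := fun k => f b + k * ε)
    (fun m n hmn => by dsimp only; gcongr)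
  refine ⟨({j | f b + (k + 1 : ℕ) * ε ≤ f j} : Finset ι), ?_, ?_, fun c hc e he => ?_⟩
  · have : ((k + 1 : ℕ) : ℝ) * ε ≤ (Fintype.card ι + 1) * ε := by
      push_cast
      gcongr
    simp only [mem_filter, mem_univ, true_and]
    linarith
  · have : 0 < ((k + 1 : ℕ) : ℝ) * ε := by positivity
    simpa only [mem_filter, mem_univ, true_and, not_le, lt_add_iff_pos_right]
  · simp only [mem_filter, mem_univ, true_and] at hc he
    have := (hgap e).resolve_right he
    push_cast at hc
    linarith

end Gaps

section Clusterings

variable {ι X : Type*}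

lemma card_quotient_lt_iff [Finite ι] {S : Setoid ι} :
    Nat.card (Quotient S) < Nat.card ι ↔ ∃ a b, a ≠ b ∧ S a b := by
  have hsurj : Function.Surjective (Quotient.mk S) := Quotient.mk_surjective
  have hle := Nat.card_le_card_of_surjective _ hsurj
  have hinj : Nat.card (Quotient S) = Nat.card ι ↔ Function.Injective (Quotient.mk S) :=
    ⟨fun h => (hsurj.bijective_of_nat_card_le h.ge).injective,
      fun h => (Nat.card_congr (Equiv.ofBijective _ ⟨h, hsurj⟩)).symm⟩
  rw [hle.lt_iff_ne, Ne, hinj, Function.not_injective_iff]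
  simp only [Quotient.eq, and_comm]

lemma one_lt_card_quotient_iff [Finite ι] {S : Setoid ι} :
    1 < Nat.card (Quotient S) ↔ ∃ a b, ¬ S a b := by
  rw [Finite.one_lt_card_iff_nontrivial, nontrivial_iff, Quotient.exists]
  simp only [Quotient.exists, ne_eq, Quotient.eq]

lemma setoid_eq_of_le_of_card_quotient_eq [Finite ι] {S T : Setoid ι} (hle : S ≤ T)
    (hcard : Nat.card (Quotient S) = Nat.card (Quotient T)) : S = T := by
  have hsurj : Function.Surjective (Quotient.map' (s₁ := S) (s₂ := T) id hle) :=
    Quotient.ind fun a => ⟨Quotient.mk S a, rfl⟩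
  have hinj := (hsurj.bijective_of_nat_card_le hcard.le).injective
  exact le_antisymm hle fun a b h => Quotient.exact
    (hinj (a₁ := Quotient.mk S a) (a₂ := Quotient.mk S b) (Quotient.sound h))

variable [PseudoMetricSpace X] {x y : ι → X} {δ δ' : ℝ} {S T : Setoid ι}

/-- The points of the family `x` in a common class of `S` are at distance less than `δ`, and all
others are at distance at least `2 * δ`. -/
def IsClustering (x : ι → X) (δ : ℝ) (S : Setoid ι) : Prop :=
  ∀ a b, (S a b ∧ dist (x a) (x b) < δ) ∨ (¬ S a b ∧ 2 * δ ≤ dist (x a) (x b))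

lemma IsClustering.comp {κ : Type*} (h : IsClustering x δ S) (g : κ → ι) :
    IsClustering (x ∘ g) δ (S.comap g) :=
  fun a b => h (g a) (g b)

lemma IsClustering.le_of_le (hS : IsClustering x δ S) (hT : IsClustering y δ' T) (hle : δ ≤ δ')
    (hxy : ∀ a, 2 * dist (x a) (y a) < δ') : S ≤ T := by
  intro a b hab
  have hx := ((hS a b).resolve_right fun h => h.1 hab).2
  by_contra hT'
  have hy := ((hT a b).resolve_left fun h => hT' h.1).2
  have := dist_triangle4 (y a) (x a) (x b) (y b)
  rw [dist_comm (y a) (x a)] at this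
  linarith [hxy a, hxy b]

lemma IsClustering.eq_of_card_quotient_eq [Finite ι] (hS : IsClustering x δ S)
    (hT : IsClustering y δ' T) (hxy : ∀ a, 2 * dist (x a) (y a) < min δ δ')
    (hcard : Nat.card (Quotient S) = Nat.card (Quotient T)) : S = T := by
  simp only [lt_min_iff] at hxy
  rcases le_total δ δ' with h | h
  · exact setoid_eq_of_le_of_card_quotient_eq (hS.le_of_le hT h fun a => (hxy a).2) hcard
  · refine (setoid_eq_of_le_of_card_quotient_eq (hT.le_of_le hS h fun a => ?_) hcard.symm).symm
    rw [dist_comm]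
    exact (hxy a).1

lemma exists_isClustering [Fintype ι] (x : ι → X) (hδ : 0 < δ) :
    ∃ s ∈ Set.Icc δ (δ * 2 ^ (Fintype.card ι * Fintype.card ι)), ∃ S, IsClustering x s S := by
  have hmono : Monotone fun k : ℕ => δ * 2 ^ k :=
    (pow_right_mono₀ (one_le_two (α := ℝ))).const_mul hδ.le
  obtain ⟨k, hk, hgap⟩ := exists_forall_lt_or_le (fun q : ι × ι => dist (x q.1) (x q.2)) hmono
  rw [Fintype.card_prod] at hk
  set s : ℝ := δ * 2 ^ k
  have hs0 : 0 < s := by positivity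
  have hdist (a b : ι) : dist (x a) (x b) < s ∨ 2 * s ≤ dist (x a) (x b) :=
    (hgap (a, b)).imp_right fun h => by rwa [pow_succ, ← mul_assoc, mul_comm] at h
  refine ⟨s, ⟨by simpa using hmono k.zero_le, hmono hk⟩,
    ⟨fun a b => dist (x a) (x b) < s, fun a => by rwa [dist_self],
      fun {a b} h => by rwa [dist_comm], fun {a b c} hab hbc => ?_⟩, fun a b => ?_⟩
  · refine (hdist a c).resolve_right fun hac => ?_
    linarith [dist_triangle (x a) (x b) (x c)]
  · refine (hdist a b).imp (fun h => ⟨h, h⟩) fun h => ⟨fun hlt : dist (x a) (x b) < s => ?_, h⟩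
    linarith

end Clusterings

/-! ### Configurations of points -/

section Rotation

variable {p : ℕ} {X : Type*}

/-- The cyclic shift of a family of points. -/
def rotate (x : ZMod p → X) : ZMod p → X := x ∘ (· - 1)

lemma rotate_iterate (m : ℕ) (x : ZMod p → X) : rotate^[m] x = fun j => x (j - m) := by
  induction m with
  | zero => simp
  | succ m ih =>
    rw [Function.iterate_succ_apply', ih]
    funext j
    simp only [rotate, Function.comp_apply, Nat.cast_add, Nat.cast_one]
    rw [sub_sub, add_comm]

lemma rotate_iterate_self : (rotate : (ZMod p → X) → ZMod p → X)^[p] = id := by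
  funext x
  simp [rotate_iterate]

lemma lipschitzWith_one_rotate [NeZero p] [PseudoMetricSpace X] :
    LipschitzWith 1 (rotate : (ZMod p → X) → ZMod p → X) :=
  LipschitzWith.of_dist_le_mul fun x y => by
    rw [NNReal.coe_one, one_mul, dist_pi_le_iff dist_nonneg]
    exact fun j => dist_le_pi_dist x y (j - 1)

end Rotation

section CappedSimplex

variable {α ι : Type*} [Fintype α] [Fintype ι] {c c' : ι → ℕ} {x : α → ι → ℝ}

/-- The families of points of `ι → ℝ`, with nonnegative coordinates of total sum one, in which at
most `c i` points have a nonzero `i`-th coordinate. -/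
def cappedSimplex (c : ι → ℕ) : Set (α → ι → ℝ) :=
  {x | (∀ j i, 0 ≤ x j i) ∧ ∑ j, ∑ i, x j i = 1 ∧ ∀ i, #{j | x j i ≠ 0} ≤ c i}

lemma cappedSimplex_mono (hc : c ≤ c') :
    (cappedSimplex c : Set (α → ι → ℝ)) ⊆ cappedSimplex c' :=
  fun _ hx => ⟨hx.1, hx.2.1, fun i => (hx.2.2 i).trans (hc i)⟩

lemma isCompact_cappedSimplex (c : ι → ℕ) :
    IsCompact (cappedSimplex c : Set (α → ι → ℝ)) := by
  refine (isCompact_Icc (a := (0 : α → ι → ℝ)) (b := 1)).of_isClosed_subset ?_ ?_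
  · have hcard (x : α → ι → ℝ) (i : ι) :
        #{j | x j i ≠ 0} ≤ c i ↔ ∃ U : Finset α, #U ≤ c i ∧ ∀ j ∉ U, x j i = 0 := by
      refine ⟨fun h => ⟨_, h, fun j hj => by simpa using hj⟩, fun ⟨U, hU, h⟩ =>
        (card_le_card fun j hj => ?_).trans hU⟩
      by_contra hjU
      exact (mem_filter.1 hj).2 (h j hjU)
    simp only [cappedSimplex, hcard, Set.ofPred_and, Set.ofPred_forall, Set.ofPred_exists]
    refine (isClosed_iInter fun j => isClosed_iInter fun i => isClosed_le (by fun_prop)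
      (by fun_prop)).inter ((isClosed_eq (by fun_prop) (by fun_prop)).inter
      (isClosed_iInter fun i => isClosed_iUnion_of_finite fun U => isClosed_const.inter
        (isClosed_iInter fun j => isClosed_iInter fun _ => isClosed_eq (by fun_prop)
          (by fun_prop))))
  · rintro x ⟨h0, h1, -⟩
    refine ⟨h0, fun j i => ?_⟩
    rw [Pi.one_apply, Pi.one_apply, ← h1]
    exact (single_le_sum (fun i _ => h0 j i) (mem_univ i)).trans
      (single_le_sum (f := fun j => ∑ i, x j i) (fun j _ => sum_nonneg fun i _ => h0 j i)
        (mem_univ j))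

lemma exists_le_dist_of_mem_cappedSimplex (hc : ∀ i, c i < Fintype.card α)
    (hx : x ∈ cappedSimplex c) :
    ∃ a b, ((Fintype.card α * Fintype.card ι : ℝ))⁻¹ ≤ dist (x a) (x b) := by
  obtain ⟨-, h1, h2⟩ := hx
  by_contra! h
  have hvanish (i : ι) : ∃ b, x b i = 0 := by
    by_contra! hne
    refine (hc i).not_ge ((card_univ (α := α)).symm.trans_le ?_)
    simpa [hne] using h2 i
  have hlt (a : α) (i : ι) : x a i < (Fintype.card α * Fintype.card ι : ℝ)⁻¹ := by
    obtain ⟨b, hb⟩ := hvanish i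
    have := (dist_le_pi_dist (x a) (x b) i).trans_lt (h a b)
    rw [hb, Real.dist_0_eq_abs] at this
    exact (le_abs_self _).trans_lt this
  obtain ⟨a, -, ha⟩ := exists_ne_zero_of_sum_ne_zero (h1.trans_ne one_ne_zero)
  obtain ⟨i, -, -⟩ := exists_ne_zero_of_sum_ne_zero ha
  have hα : Nonempty α := ⟨a⟩
  have hι : Nonempty ι := ⟨i⟩
  have hsum : ∑ a, ∑ i, x a i < ∑ _a : α, ∑ _i : ι, (Fintype.card α * Fintype.card ι : ℝ)⁻¹ :=
    sum_lt_sum_of_nonempty univ_nonempty fun a _ =>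
      sum_lt_sum_of_nonempty univ_nonempty fun i _ => hlt a i
  simp only [h1, sum_const, card_univ, nsmul_eq_mul, ← mul_assoc] at hsum
  rw [mul_inv_cancel₀ (by positivity)] at hsum
  exact lt_irrefl _ hsum

lemma rotate_mem_cappedSimplex {p : ℕ} [NeZero p] {x : ZMod p → ι → ℝ}
    (hx : x ∈ cappedSimplex c) : rotate x ∈ cappedSimplex c := by
  obtain ⟨h0, h1, h2⟩ := hx
  refine ⟨fun j i => h0 _ i, ?_, fun i => le_trans (le_of_eq ?_) (h2 i)⟩
  · rw [← h1]
    exact (Equiv.subRight (1 : ZMod p)).sum_comp fun j => ∑ i, x j i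
  · exact card_equiv (Equiv.subRight 1) fun j => by simp only [mem_filter, mem_univ, true_and]; rfl

variable [DecidableEq α] [DecidableEq ι]

lemma single_single_mem_cappedSimplex (a : α) {m : ι} (hm : 0 < c m) :
    Pi.single a (Pi.single m (1 : ℝ)) ∈ cappedSimplex c := by
  refine ⟨fun j i => ?_, ?_, fun i => ?_⟩
  · simp only [Pi.single_apply, Pi.zero_apply, ite_apply]
    split_ifs <;> norm_num
  · simp [Pi.single_apply, ite_apply]
  · by_cases hi : i = m
    · subst hi
      refine (card_le_card (t := {a}) fun j => ?_).trans ((card_singleton _).trans_le hm)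
      simp +contextual [Pi.single_apply, ite_apply]
    · simp [Pi.single_apply, ite_apply, hi]

lemma segment_single_single_subset_cappedSimplex (hx : x ∈ cappedSimplex c) (a : α)
    (hc : c ≤ c') {m : ι} (hm : c m < c' m) :
    segment ℝ x (Pi.single a (Pi.single m 1)) ⊆ cappedSimplex c' := by
  set w : α → ι → ℝ := Pi.single a (Pi.single m 1) with hw
  have hw' : w ∈ cappedSimplex c' := single_single_mem_cappedSimplex a (by omega)
  rintro _ ⟨s, t, hs, ht, hst, rfl⟩
  refine ⟨fun j i => ?_, ?_, fun i => ?_⟩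
  · exact add_nonneg (mul_nonneg hs (hx.1 j i)) (mul_nonneg ht (hw'.1 j i))
  · simp only [Pi.add_apply, Pi.smul_apply, smul_eq_mul, sum_add_distrib, ← mul_sum, hx.2.1,
      hw'.2.1, mul_one, hst]
  · by_cases hi : i = m
    · subst hi
      refine (card_le_card (t := insert a ({j | x j i ≠ 0} : Finset α)) fun j hj => ?_).trans
        ((card_insert_le _ _).trans ((Nat.succ_le_succ (hx.2.2 i)).trans hm))
      by_contra! h
      simp_all [Pi.single_apply, ite_apply]
    · refine (card_le_card fun j hj => ?_).trans ((hx.2.2 i).trans (hc i))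
      by_contra! h
      simp_all [Pi.single_apply, ite_apply]

/-- The caps of the stages rise to `q` one coordinate after the other, each stage raising a single
cap by one, and the new apex is a unit vector in the coordinate whose cap is raised. -/
lemma isEquivariantTower_cappedSimplex {p : ℕ} [NeZero p] {q d n : ℕ} (hn : n < d * q) :
    IsEquivariantTower rotate
      (fun k => (cappedSimplex fun i : Fin d => min q (k + 1 - i * q) : Set (ZMod p → Fin d → ℝ)))
      n where
  nonempty := by
    have hd : 0 < d := Nat.pos_of_mul_pos_right (by omega : 0 < d * q)
    have hq : 0 < q := Nat.pos_of_mul_pos_left (by omega : 0 < d * q)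
    exact ⟨_, single_single_mem_cappedSimplex (m := ⟨0, hd⟩) 0 (by simpa using hq)⟩
  mapsTo _ _ _ := rotate_mem_cappedSimplex
  cone k hk := by
    have hq : 0 < q := Nat.pos_of_mul_pos_left (by omega : 0 < d * q)
    let m : Fin d := ⟨(k + 1) / q, (Nat.div_lt_iff_lt_mul hq).2 (by omega)⟩
    have hraise : min q (k + 1 - m * q) < min q (k + 1 + 1 - m * q) := by
      have hdiv : m * q + (k + 1) % q = k + 1 := Nat.div_add_mod' (k + 1) q
      have hmod : (k + 1) % q < q := Nat.mod_lt _ hq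
      omega
    exact ⟨_, single_single_mem_cappedSimplex (m := m) 0 (Nat.zero_lt_of_lt hraise), fun x hx =>
      segment_single_single_subset_cappedSimplex hx 0
        (fun _ => min_le_min_left _ (Nat.sub_le_sub_right (k + 1).le_succ _)) hraise⟩

end CappedSimplex

/-! ### Patterns -/

section Patterns

variable {p : ℕ}

/-- The cyclic shift on the set of all subsets of `ZMod p` and all partitions of `ZMod p`. -/
def shiftPattern : Finset (ZMod p) ⊕ Setoid (ZMod p) → Finset (ZMod p) ⊕ Setoid (ZMod p) :=
  Sum.map (map (Equiv.addRight 1).toEmbedding) (Setoid.comap (· - 1))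

/-- The patterns visible in a configuration `x` of points with a family of functions `f i` on it:
superlevel sets of some `f i` that are separated by a gap, and clusterings of the points. The
colour of a pattern records the index `i` and the size of the set, or the number of clusters. -/
inductive HasPattern {ι X : Type*} [PseudoMetricSpace X] (ε δ : ℝ) (f : ι → ZMod p → ℝ)
    (x : ZMod p → X) :
    ι × Fin (p - 1) ⊕ Fin (p - 2) → Finset (ZMod p) ⊕ Setoid (ZMod p) → Prop
  | superlevel {i : ι} {m : Fin (p - 1)} {U : Finset (ZMod p)} (hcard : #U = m + 1)
      (hU : HasGap (f i) ε U) : HasPattern ε δ f x (.inl (i, m)) (.inl U)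
  | clustering {m : Fin (p - 2)} {S : Setoid (ZMod p)} {s : ℝ}
      (hcard : Nat.card (Quotient S) = m + 2) (hs : δ ≤ s) (hS : IsClustering x s S) :
      HasPattern ε δ f x (.inr m) (.inr S)

variable {ι X : Type*} [PseudoMetricSpace X] {ε δ : ℝ} {f g : ι → ZMod p → ℝ}
  {x y : ZMod p → X} {c : ι × Fin (p - 1) ⊕ Fin (p - 2)}
  {τ τ' : Finset (ZMod p) ⊕ Setoid (ZMod p)}

lemma HasPattern.rotate_shiftPattern (h : HasPattern ε δ f x c τ) :
    HasPattern ε δ (fun i => rotate (f i)) (rotate x) c (shiftPattern τ) := by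
  rcases h with ⟨hcard, hU⟩ | ⟨hcard, hs, hS⟩
  · refine .superlevel ((card_map _).trans hcard) ?_
    simpa [rotate, Function.comp_def, sub_eq_add_neg] using hU.map_equiv (Equiv.addRight 1)
  · refine .clustering (Eq.trans ?_ hcard) hs (hS.comp (· - 1))
    exact Nat.card_congr (Quotient.congr (Equiv.subRight 1) fun _ _ => Iff.rfl)

lemma HasPattern.eq_of_close [NeZero p] (hx : HasPattern ε δ f x c τ)
    (hy : HasPattern ε δ g y c τ') (hfg : ∀ i a, |f i a - g i a| < ε)
    (hxy : ∀ a, 2 * dist (x a) (y a) < δ) : τ = τ' := by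
  rcases hx with ⟨hcard, hU⟩ | ⟨hcard, hs, hS⟩
  · obtain ⟨hcard', hV⟩ := hy
    rw [hU.eq_of_card_eq hV (hcard.trans hcard'.symm) (hfg _)]
  · obtain - | ⟨hcard', hs', hT⟩ := hy
    rw [hS.eq_of_card_quotient_eq hT (fun a => (hxy a).trans_le (le_min hs hs'))
      (hcard.trans hcard'.symm)]

lemma mem_of_map_addRight_one_eq [NeZero p] {U : Finset (ZMod p)}
    (hU : U.map (Equiv.addRight 1).toEmbedding = U) {a : ZMod p} (ha : a ∈ U) (b : ZMod p) :
    b ∈ U := by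
  have hadd (n : ℕ) : a + n ∈ U := by
    induction n with
    | zero => simpa
    | succ n ih => rw [← hU, mem_map_equiv]; simpa [← add_assoc]
  simpa using hadd (b - a).val

lemma rel_of_comap_sub_one_eq [Fact p.Prime] {S : Setoid (ZMod p)} (hS : S.comap (· - 1) = S)
    {a b : ZMod p} (hne : a ≠ b) (hab : S a b) (c d : ZMod p) : S c d := by
  have hshift (n : ℕ) {c d : ZMod p} (hcd : S c d) : S (c + n) (d + n) := by
    induction n with
    | zero => simpa
    | succ n ih => rw [← hS, Setoid.comap_rel]; simpa [← add_assoc]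
  have hstep (e : ZMod p) : S e (e + (b - a)) := by
    have := hshift (e - a).val hab
    rwa [ZMod.natCast_zmod_val, add_sub_cancel, add_sub_left_comm] at this
  have hmul (n : ℕ) : S c (c + n * (b - a)) := by
    induction n with
    | zero => simp
    | succ n ih => exact S.trans ih (by simpa [add_mul, add_assoc] using hstep (c + n * (b - a)))
  simpa [sub_ne_zero.2 hne.symm] using hmul ((d - c) / (b - a)).val

lemma HasPattern.not_isFixedPt [Fact p.Prime] (h : HasPattern ε δ f x c τ) :
    ¬ Function.IsFixedPt shiftPattern τ := by
  intro hτ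
  cases h with
  | @superlevel i m U hcard =>
    obtain ⟨a, ha⟩ := card_pos.1 (by omega : 0 < #U)
    have huniv : U = univ :=
      eq_univ_of_forall (mem_of_map_addRight_one_eq (Sum.inl_injective hτ) ha)
    rw [huniv, card_univ, ZMod.card] at hcard
    omega
  | @clustering m S s hcard =>
    obtain ⟨a, b, hab, hrel⟩ := card_quotient_lt_iff.1
      (by rw [Nat.card_zmod]; omega : Nat.card (Quotient S) < Nat.card (ZMod p))
    obtain ⟨c, d, hcd⟩ := one_lt_card_quotient_iff.1 (by omega : 1 < Nat.card (Quotient S))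
    exact hcd (rel_of_comap_sub_one_eq (Sum.inr_injective hτ) hab hrel c d)

lemma exists_hasPattern_of_gap [NeZero p] (hε : 0 < ε) {i : ι} {a b : ZMod p}
    (hab : f i b + (p + 1) * ε ≤ f i a) : ∃ c τ, HasPattern ε δ f x c τ := by
  obtain ⟨U, ha, hb, hU⟩ := exists_hasGap hε (f := f i) (a := a) (b := b) (by rwa [ZMod.card])
  have hpos : 0 < #U := card_pos.2 ⟨a, ha⟩
  have hlt : #U < p := (card_lt_univ_of_notMem hb).trans_eq (ZMod.card p)
  exact ⟨.inl (i, ⟨#U - 1, by omega⟩), .inl U, .superlevel (by dsimp only; omega) hU⟩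

lemma exists_hasPattern_of_dist [NeZero p] (hδ : 0 < δ) {a b a' b' : ZMod p} (hne : a ≠ b)
    (hlt : dist (x a) (x b) < δ) (hle : δ * 2 ^ (p * p) ≤ dist (x a') (x b')) :
    ∃ c τ, HasPattern ε δ f x c τ := by
  obtain ⟨s, ⟨hδs, hs⟩, S, hS⟩ := exists_isClustering x hδ
  rw [ZMod.card] at hs
  have hab : S a b := ((hS a b).resolve_right fun h => by linarith [h.2]).1
  have hab' : ¬ S a' b' := ((hS a' b').resolve_left fun h => by linarith [h.2]).1
  have hcard : Nat.card (Quotient S) < p := by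
    simpa using card_quotient_lt_iff.2 ⟨a, b, hne, hab⟩
  have hcard' : 1 < Nat.card (Quotient S) := one_lt_card_quotient_iff.2 ⟨a', b', hab'⟩
  exact ⟨.inr ⟨Nat.card (Quotient S) - 2, by omega⟩, .inr S,
    .clustering (by dsimp only; omega) hδs hS⟩

end Patterns

section Equalization

variable {p d : ℕ} {ι : Type*} [Fact p.Prime]
  {F : (ZMod p → Fin d → ℝ) → ι → ZMod p → ℝ}

lemma exists_forall_exists_hasPattern [Finite ι] (hd : 0 < d) (hF : Continuous F)
    (hne : ∀ x, Function.Injective x → ∃ i a b, F x i a ≠ F x i b) :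
    ∃ ε > 0, ∃ δ > 0, ∀ x ∈ cappedSimplex fun _ => p - 1, ∃ c τ, HasPattern ε δ (F x) x c τ := by
  have hp : 0 < p := (Fact.out : p.Prime).pos
  let δ : ℝ := ((p : ℝ) * d)⁻¹ / 2 ^ (p * p)
  have hδ : 0 < δ := by positivity
  have hclosed : IsClosed {x : ZMod p → Fin d → ℝ | ∀ a b, a ≠ b → δ ≤ dist (x a) (x b)} := by
    simp only [Set.ofPred_forall]
    exact isClosed_iInter fun a => isClosed_iInter fun b => isClosed_iInter fun _ =>
      isClosed_le (by fun_prop) (by fun_prop)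
  obtain ⟨ε, hε, hgap⟩ := exists_pos_forall_add_le
    ((isCompact_cappedSimplex fun _ => p - 1).inter_right hclosed) hF.continuousOn
    fun x hx => hne x fun a b hab => by_contra fun h => by simpa [hab, hδ.not_ge] using hx.2 a b h
  refine ⟨ε / (p + 1), by positivity, δ, hδ, fun x hx => ?_⟩
  by_cases hsep : ∀ a b, a ≠ b → δ ≤ dist (x a) (x b)
  · obtain ⟨i, a, b, h⟩ := hgap x ⟨hx, hsep⟩
    exact exists_hasPattern_of_gap (by positivity) (by rwa [mul_div_cancel₀ _ (by positivity)])
  · push Not at hsep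
    obtain ⟨a, b, hab, hlt⟩ := hsep
    obtain ⟨a', b', hle⟩ := exists_le_dist_of_mem_cappedSimplex
      (fun _ => by rw [ZMod.card]; omega) hx
    rw [ZMod.card, Fintype.card_fin] at hle
    exact exists_hasPattern_of_dist hδ hab hlt (by rwa [div_mul_cancel₀ _ (by positivity)])

theorem exists_injective_forall_eq [Fintype ι] (hι : Fintype.card ι < d) (hF : Continuous F)
    (hrot : ∀ x i, F (rotate x) i = rotate (F x i)) :
    ∃ x : ZMod p → Fin d → ℝ, Function.Injective x ∧ ∀ i a b, F x i a = F x i b := by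
  by_contra! hne
  obtain ⟨ε, hε, δ, hδ, hpattern⟩ := exists_forall_exists_hasPattern (by omega) hF hne
  obtain ⟨η, hη, hunif⟩ := Metric.uniformContinuousOn_iff.1
    ((isCompact_cappedSimplex fun _ => p - 1).uniformContinuousOn_of_continuous
      hF.continuousOn) ε hε
  have hp : 1 < p := (Fact.out : p.Prime).one_lt
  have hcard : Fintype.card (ι × Fin (p - 1) ⊕ Fin (p - 2)) < d * (p - 1) := by
    have : (Fintype.card ι + 1) * (p - 1) ≤ d * (p - 1) := Nat.mul_le_mul_right _ hι
    simp only [Fintype.card_sum, Fintype.card_prod, Fintype.card_fin]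
    rw [add_mul] at this
    omega
  have hmem {k : ℕ} {x : ZMod p → Fin d → ℝ} :
      x ∈ (cappedSimplex fun i : Fin d => min (p - 1) (k + 1 - i * (p - 1))) →
        x ∈ cappedSimplex fun _ => p - 1 := fun h => cappedSimplex_mono (fun _ => min_le_left _ _) h
  obtain ⟨x, hx, y, hy, hxy, c, τ, τ', hτ, hτ', hττ'⟩ :=
    (isEquivariantTower_cappedSimplex hcard).exists_close_ne_of_forall_exists rotate_iterate_self
      lipschitzWith_one_rotate le_rfl (valid := fun x => HasPattern ε δ (F x) x)
      (fun x hx => hpattern x (hmem hx))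
      (fun x c τ h => by simpa only [funext (hrot x)] using h.rotate_shiftPattern)
      (fun _ _ _ h => h.not_isFixedPt) (η := min η (δ / 2)) (by positivity)
  have hF_lt := hunif x (hmem hx) y (hmem hy) (hxy.trans_le (min_le_left _ _))
  refine hττ' (hτ.eq_of_close hτ' (fun i a => ?_) fun a => ?_)
  · exact ((dist_le_pi_dist (F x i) (F y i) a).trans (dist_le_pi_dist (F x) (F y) i)).trans_lt hF_lt
  · linarith [dist_le_pi_dist x y a, hxy.trans_le (min_le_right _ _)]

end Equalization

theorem exists_pgons_symmetric_continuous_general {p : ℕ} [Fact p.Prime] {ι E : Type*} [Fintype ι]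
    [AddCommGroup E] [Module ℝ E] [TopologicalSpace E] [IsTopologicalAddGroup E]
    [ContinuousSMul ℝ E] (hE : (Fintype.card ι : Cardinal) < Module.rank ℝ E) (ρ : ι → E → E → ℝ)
    (hcont : ∀ i, Continuous fun q : E × E => ρ i q.1 q.2) (t : ι → ZMod p) :
    ∃ x : ZMod p → E, ∃ c : ι → ℝ,
      Function.Injective x ∧ ∀ i k, ρ i (x k) (x (k + t i)) = c i := by
  have hrank : ((Fintype.card ι + 1 : ℕ) : Cardinal) ≤ Module.rank ℝ E := by
    exact_mod_cast Cardinal.natCast_add_one_le_iff.2 hE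
  obtain ⟨f, hf⟩ := Module.le_rank_iff_exists_linearMap.1 hrank
  have hfc : Continuous f := f.continuous_on_pi
  have hedge (i : ι) (j : ZMod p) :
      Continuous fun x : ZMod p → Fin (Fintype.card ι + 1) → ℝ =>
        ρ i (f (x j)) (f (x (j + t i))) := (hcont i).comp₂ (by fun_prop) (by fun_prop)
  obtain ⟨x, hx, heq⟩ := exists_injective_forall_eq (Nat.lt_succ_self (Fintype.card ι))
    (continuous_pi fun i => continuous_pi fun j => hedge i j)
    fun x i => by funext j; simp [rotate, add_sub_right_comm]
  exact ⟨f ∘ x, _, hf.comp hx, fun i k => heq i k 0⟩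

/-- Remark (generalization of Theorem 2): for `d > r` and symmetric continuous maps
`ρᵢ : ℝᵈ × ℝᵈ → ℝ`, there are `p` distinct points and constants `cᵢ ∈ ℝ` such that
each `p`-gon `C_{tᵢ}` has all its `ρᵢ`-edge-values equal to `cᵢ`. -/
theorem exists_pgons_symmetric_continuous
    (p d r : ℕ) (hp : p.Prime) (hodd : Odd p) (hd : 0 < d) (hr : 0 < r) (hdr : d > r)
    (ρ : Fin r → EuclideanSpace ℝ (Fin d) → EuclideanSpace ℝ (Fin d) → ℝ)
    (hsymm : ∀ i, ∀ x y, ρ i x y = ρ i y x)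
    (hcont : ∀ i, Continuous fun q : EuclideanSpace ℝ (Fin d) × EuclideanSpace ℝ (Fin d) =>
      ρ i q.1 q.2)
    (t : Fin r → ℕ) (ht : ∀ i, 1 ≤ t i ∧ t i ≤ (p - 1) / 2) :
    ∃ x : ZMod p → EuclideanSpace ℝ (Fin d), ∃ c : Fin r → ℝ,
      Function.Injective x ∧
      ∀ i : Fin r, ∀ k : ZMod p,
        ρ i (x (k * (t i : ZMod p))) (x ((k + 1) * (t i : ZMod p))) = c i := by
  have : Fact p.Prime := ⟨hp⟩
  obtain ⟨x, c, hx, heq⟩ := exists_pgons_symmetric_continuous_general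
    (by simpa [← Module.finrank_eq_rank] using hdr) ρ hcont fun i => (t i : ZMod p)
  exact ⟨x, c, hx, fun i k => by simpa [add_mul] using heq i (k * t i)⟩
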